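/- Let N be a positive even integer, τ ∈ H, and x₀ ∈ ℝ. Then lim_{x → x₀} τ^{-1/2} G_{−1/τ}(x) = (e(1/8)/N) · ∑_{n ∈ ℤ} g_τ(n/N) e(n x₀ / N), where G_σ(x) := ∑_{n ∈ ℤ} g_σ(Nn + x) and τ^{-1/2} is the principal branch; the series on the right converges absolutely. -/

import Mathlib

open Complex MeasureTheory
open scoped Classical

noncomputable section

/-- `e(a) = exp(2πia)`. -/
def e (a : ℂ) : ℂ := Complex.exp (2 * (Real.pi : ℂ) * Complex.I * a)

/-- The Fourier transform `F(g)(x) = ∫ g(w) e(wx) dw`. -/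
def fourierT (g : ℝ → ℂ) (x : ℝ) : ℂ := ∫ w : ℝ, g w * e ((w * x : ℝ))

/-- The operator `E_σ(f)(x) = e(x²σ/2) ∫_0^x e(-w²σ/2) f(w) dw`. -/
def Eop (σ : ℂ) (f : ℝ → ℂ) (x : ℝ) : ℂ :=
  e ((x : ℂ)^2 * σ / 2) * ∫ w in (0:ℝ)..x, e (-(w : ℂ)^2 * σ / 2) * f w

/-- `ω_τ(x) = e(-x²τ/2) ∑_{m ∈ ℤ+1/2, m ≥ |x|} e(m²τ/2 + m/2)`. -/
def omega (τ : ℂ) (x : ℝ) : ℂ :=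
  e (-(x : ℂ)^2 * τ / 2) *
    ∑' m : ℤ, if |x| ≤ (m : ℝ) + 1/2 then
      e (((m : ℂ) + 1/2)^2 / 2 * τ + ((m : ℂ) + 1/2) / 2) else 0

/-- `η³(τ) = -i ∑_{m ∈ ℤ+1/2} m e(m²τ/2 + m/2)`. -/
def eta3 (τ : ℂ) : ℂ :=
  -Complex.I * ∑' m : ℤ, ((m : ℂ) + 1/2) * e (((m : ℂ) + 1/2)^2 / 2 * τ + ((m : ℂ) + 1/2) / 2)

/-- The complementary error function. -/
def erfc (x : ℝ) : ℝ := (2 / Real.sqrt Real.pi) * ∫ t in Set.Ioi x, Real.exp (-t^2)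

/-- `g⁺_τ`. -/
def gplus (τ : ℂ) (x : ℝ) : ℂ :=
  e (-(x : ℂ)^2 * τ / 2) * ((Real.sign x : ℂ) / (Complex.I * eta3 τ)) *
    ∑' m : ℤ, if |x| < (m : ℝ) + 1/2 then
      (((m : ℝ) + 1/2 - |x| : ℝ) : ℂ) * e (((m : ℂ) + 1/2)^2 / 2 * τ + ((m : ℂ) + 1/2) / 2)
    else 0

/-- `g*_τ`. -/
def gstar (τ : ℂ) (x : ℝ) : ℂ :=
  e (-(x : ℂ)^2 * τ / 2) * ((Real.sign x : ℂ) / 2) *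
    (erfc (Real.sqrt (2 * Real.pi * τ.im) * |x|) : ℂ)

/-- `g_τ = g⁺_τ - g*_τ`. -/
def gfun (τ : ℂ) (x : ℝ) : ℂ := gplus τ x - gstar τ x

/-- The operator `ξ_k f = 2i v^k conj(∂f/∂τ̄)`, with `∂/∂τ̄ = (1/2)(∂/∂u + i ∂/∂v)`. -/
def xi (k : ℝ) (f : ℂ → ℂ) (τ : ℂ) : ℂ :=
  2 * Complex.I * ((τ.im ^ k : ℝ) : ℂ) *
    (starRingEnd ℂ) ((1/2 : ℂ) * (fderiv ℝ f τ 1 + Complex.I * fderiv ℝ f τ Complex.I))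

/-- Sum of divisors function `σ₁`. -/
def sigma1 (n : ℕ) : ℕ := ∑ d ∈ Nat.divisors n, d

/-- The weight 2 Eisenstein series `E₂`. -/
def E2 (τ : ℂ) : ℂ := 1 - 24 * ∑' n : ℕ, (sigma1 (n+1) : ℂ) * e ((n + 1 : ℂ) * τ)

/-- `ϑ̃_{N,h}`. -/
def tvtheta (N : ℕ) (h : ℝ) (τ : ℂ) : ℂ :=
  (if ∃ m : ℤ, h = (m : ℝ) + 1/2 then
      e ((h : ℂ) / 2) * E2 τ / (12 * (N : ℂ) * Complex.I * eta3 τ) else 0)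
  + ∑' n : ℤ, gfun τ ((N : ℝ) * n + h)

/-- The Schwartz function `φ_τ(x,y) = √(2v)·x·e(x²τ/2 - y²τ̄/2)`. -/
def Phi (τ : ℂ) (x y : ℝ) : ℂ :=
  (Real.sqrt (2 * τ.im) : ℂ) * (x : ℂ) *
    e ((x : ℂ)^2 * τ / 2 - (y : ℂ)^2 * (starRingEnd ℂ) τ / 2)

/-- The signature (1,1) bilinear form `B((a₁,a₂),(b₁,b₂)) = a₁b₂ + a₂b₁`. -/
def Bform (a b : ℝ × ℝ) : ℝ := a.1 * b.2 + a.2 * b.1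

/-- `Z⁺_t = (t/√2, t⁻¹/√2)`. -/
def Zp (t : ℝ) : ℝ × ℝ := (t / Real.sqrt 2, t⁻¹ / Real.sqrt 2)

/-- `Z⁻_t = (t/√2, -t⁻¹/√2)`. -/
def Zm (t : ℝ) : ℝ × ℝ := (t / Real.sqrt 2, -t⁻¹ / Real.sqrt 2)

end


lemma norm_e (a : ℂ) : ‖e a‖ = Real.exp (-2 * Real.pi * a.im) := by
  unfold e
  rw [Complex.norm_exp]
  congr 1
  simp

lemma e_add (a b : ℂ) : e (a + b) = e a * e b := by
  unfold e; rw [← Complex.exp_add]; congr 1; ring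

lemma e_ne_zero (a : ℂ) : e a ≠ 0 := Complex.exp_ne_zero _

lemma e_neg (a : ℂ) : e (-a) = (e a)⁻¹ := by
  unfold e; rw [← Complex.exp_neg]; congr 1; ring

lemma e_int (n : ℤ) : e (n : ℂ) = 1 := by
  unfold e
  rw [Complex.exp_eq_one_iff]
  exact ⟨n, by ring⟩

lemma e_zero : e 0 = 1 := by simp [e]
lemma e_half : e (1/2) = -1 := by
  unfold e
  rw [← Complex.exp_pi_mul_I]; congr 1; ring

lemma e_quarter : e (1/4) = Complex.I := by
  unfold e
  rw [show 2 * (Real.pi : ℂ) * Complex.I * (1/4) = (Real.pi / 2 : ℂ) * Complex.I by ring]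
  exact Complex.exp_pi_div_two_mul_I

lemma norm_e_real (a : ℝ) : ‖e (a : ℂ)‖ = 1 := by
  rw [norm_e]; simp

/-- coefficients -/
noncomputable def cc (τ : ℂ) (m : ℤ) : ℂ :=
  e (((m : ℂ) + 1/2)^2 / 2 * τ + ((m : ℂ) + 1/2) / 2)

lemma norm_cc (τ : ℂ) (m : ℤ) :
    ‖cc τ m‖ = Real.exp (-Real.pi * τ.im * ((m : ℝ) + 1/2)^2) := by
  unfold cc
  rw [norm_e]
  congr 1
  have h : ((m : ℂ) + 1/2)^2 / 2 * τ + ((m : ℂ) + 1/2) / 2 =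
    (((((m : ℝ) + 1/2)^2/2 : ℝ)) : ℂ) * τ + ((((m : ℝ) + 1/2) / 2 : ℝ) : ℂ) := by
    push_cast; ring
  rw [h, Complex.add_im, Complex.ofReal_im, Complex.im_ofReal_mul]
  ring

lemma cc_neg (τ : ℂ) (m : ℤ) : cc τ (-(m+1)) = - cc τ m := by
  unfold cc
  have : ((-(m+1) : ℤ) : ℂ) = -(m:ℂ) - 1 := by push_cast; ring
  rw [this]
  have h2 : (-(m:ℂ) - 1 + 1/2)^2 / 2 * τ + (-(m:ℂ) - 1 + 1/2) / 2 =
    ((m : ℂ) + 1/2)^2 / 2 * τ + ((m : ℂ) + 1/2) / 2 + ((-(m+1) : ℤ) : ℂ) + 1/2 := by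
    push_cast; ring
  rw [h2, e_add, e_add, e_int, e_half]; ring

/-- summability of `|m+1/2|^k |c_m|` over the naturals and integers -/
lemma summable_pow_cc_nat (τ : ℂ) (hτ : 0 < τ.im) (k : ℕ) :
    Summable (fun n : ℕ => ((n : ℝ) + 1/2)^k * ‖cc τ n‖) := by
  set r := Real.pi * τ.im with hr
  have hr0 : 0 < r := by positivity
  have h1 : Summable (fun n : ℕ => ((n : ℝ))^k * Real.exp (-r * n)) :=
    Real.summable_pow_mul_exp_neg_nat_mul k hr0
  have h2 := (h1.comp_injective (add_left_injective 1)).mul_left (Real.exp r)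
  refine Summable.of_nonneg_of_le (fun n => by positivity) (fun n => ?_) h2
  rw [norm_cc]
  simp only [Function.comp]
  have : Real.exp (-Real.pi * τ.im * (((n : ℤ) : ℝ) + 1/2)^2) ≤
    Real.exp r * Real.exp (-r * ((n + 1 : ℕ) : ℝ)) := by
    rw [← Real.exp_add]
    apply Real.exp_le_exp.2
    push_cast
    have : -Real.pi * τ.im * ((n:ℝ) + 1/2)^2 = -(r * ((n:ℝ) + 1/2)^2) := by rw [hr]; ring
    rw [this]
    have h3 : (n : ℝ) ≤ ((n:ℝ)+1/2)^2 := by nlinarith [sq_nonneg (n:ℝ)]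
    nlinarith
  calc ((n : ℝ) + 1/2)^k * Real.exp (-Real.pi * τ.im * (((n : ℤ) : ℝ) + 1/2)^2)
      ≤ (((n+1 : ℕ) : ℝ))^k * (Real.exp r * Real.exp (-r * ((n + 1 : ℕ) : ℝ))) := by
        gcongr
        push_cast; linarith
    _ = _ := by ring

lemma summable_pow_cc (τ : ℂ) (hτ : 0 < τ.im) (k : ℕ) :
    Summable (fun n : ℤ => |(n : ℝ) + 1/2|^k * ‖cc τ n‖) := by
  have h := summable_pow_cc_nat τ hτ k
  have e1 : ∀ n : ℕ, ((n : ℝ) + 1/2)^k * ‖cc τ n‖ = |((n:ℤ) : ℝ) + 1/2|^k * ‖cc τ n‖ := by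
    intro n
    rw [abs_of_pos]
    · simp
    · push_cast; positivity
  apply Summable.of_nat_of_neg_add_one
  · exact h.congr (fun n => e1 n)
  · refine h.congr (fun n => ?_)
    rw [e1]
    have : cc τ (-((n:ℤ) + 1)) = - cc τ n := cc_neg τ n
    rw [this, norm_neg]
    congr 2
    push_cast
    rw [← abs_neg]; congr 1; ring

lemma eta3_eq (τ : ℂ) : eta3 τ = -Complex.I * ∑' m : ℤ, ((m : ℂ) + 1/2) * cc τ m := rfl

section ne
variable (τ : ℂ) (hτ : 0 < τ.im)

/-- inverse q-Pochhammer, extended by zero -/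
noncomputable def wq (q : ℂ) (k : ℤ) : ℂ :=
  if 0 ≤ k then (∏ i ∈ Finset.range k.toNat, (1 - q^(i+1)))⁻¹ else 0

lemma one_sub_pow_ne (q : ℂ) (hq : ‖q‖ < 1) (i : ℕ) : 1 - q^(i+1) ≠ 0 := by
  intro h
  have : q^(i+1) = 1 := (sub_eq_zero.1 h).symm
  have h2 : ‖q‖^(i+1) = 1 := by rw [← norm_pow, this, norm_one]
  have h3 : ‖q‖^(i+1) < 1 := pow_lt_one₀ (norm_nonneg _) hq (by omega)
  linarith

lemma wq_rec (q : ℂ) (hq : ‖q‖ < 1) (k : ℤ) : wq q (k-1) = (1 - q^k) * wq q k := by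
  rcases lt_trichotomy k 0 with h | h | h
  · simp [wq, show ¬ (0 ≤ k) by omega, show ¬ (1 ≤ k) by omega]
  · subst h; simp [wq]
  · obtain ⟨n, rfl⟩ : ∃ n : ℕ, k = n + 1 := ⟨(k-1).toNat, by omega⟩
    have h1 : ((n:ℤ) + 1 - 1) = n := by ring
    have h2 : ((n:ℤ) + 1).toNat = n + 1 := by omega
    rw [h1]
    unfold wq
    rw [if_pos (by omega), if_pos (by omega), h2, Int.toNat_natCast, Finset.prod_range_succ, mul_inv]
    have := one_sub_pow_ne q hq n
    have h3 : q ^ ((n:ℤ) + 1) = q^(n+1) := by norm_cast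
    rw [h3]
    field_simp

lemma tendsto_prod (q : ℂ) (hq : ‖q‖ < 1) : ∃ Q : ℂ, Q ≠ 0 ∧
    Filter.Tendsto (fun n : ℕ => ∏ i ∈ Finset.range n, (1 - q^(i+1))) Filter.atTop (nhds Q) := by
  refine ⟨∏' i, (1 - q^(i+1)), ?_, ?_⟩
  · have := tprod_one_add_ne_zero_of_summable (f := fun i => - q^(i+1)) (R := ℂ) (fun i => by
      have := one_sub_pow_ne q hq i
      rwa [sub_eq_add_neg] at this) (by
      simp only [norm_neg, norm_pow]
      exact (summable_geometric_of_lt_one (norm_nonneg _) hq).comp_injective (add_left_injective 1))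
    simpa [sub_eq_add_neg] using this
  · exact (ModularForm.multipliable_one_sub_pow hq).hasProd.tendsto_prod_nat

end ne

open Complex MeasureTheory
open scoped Classical

lemma e_zpow (τ : ℂ) (k : ℤ) : (e τ)^k = e (k * τ) := by
  unfold e; rw [← Complex.exp_int_mul]; congr 1; ring

lemma cc_pred (τ : ℂ) (j : ℤ) : cc τ (j-1) = - cc τ j * (e τ)^(-j) := by
  rw [e_zpow]
  unfold cc
  rw [show (((j-1 : ℤ) : ℂ) + 1/2)^2 / 2 * τ + (((j-1 : ℤ) : ℂ) + 1/2) / 2 =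
    (((j : ℂ) + 1/2)^2 / 2 * τ + ((j : ℂ) + 1/2) / 2) + (((-j : ℤ) : ℂ) * τ) + 1/2 + ((-1 : ℤ) : ℂ) by
    push_cast; ring]
  rw [e_add, e_add, e_add, e_half, e_int]; ring

lemma cc_succ (τ : ℂ) (j : ℤ) : cc τ (j+1) = - cc τ j * (e τ)^(j+1) := by
  have := cc_pred τ (j+1)
  rw [add_sub_cancel_right] at this
  rw [this]
  have h : (e τ)^(-(j+1)) * (e τ)^(j+1) = 1 := by
    rw [← zpow_add₀ (e_ne_zero τ)]; simp
  linear_combination (-cc τ (j+1)) * h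

lemma norm_q (τ : ℂ) (hτ : 0 < τ.im) : ‖e τ‖ < 1 := by
  rw [norm_e, Real.exp_lt_one_iff]
  have := Real.pi_pos
  nlinarith

lemma wq_bound (q : ℂ) (hq : ‖q‖ < 1) : ∃ C : ℝ, 0 ≤ C ∧ ∀ k, ‖wq q k‖ ≤ C := by
  obtain ⟨Q, hQ, hT⟩ := tendsto_prod q hq
  have hT' := (hT.inv₀ hQ)
  obtain ⟨C, hC⟩ := (Metric.isBounded_range_of_tendsto _ hT').exists_norm_le
  refine ⟨max C 0, le_max_right _ _, fun k => ?_⟩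
  unfold wq
  split_ifs
  · exact (hC _ ⟨k.toNat, rfl⟩).trans (le_max_left _ _)
  · simp

lemma wq_tendsto (q : ℂ) (hq : ‖q‖ < 1) : ∃ Q : ℂ, Q ≠ 0 ∧
    ∀ j : ℤ, Filter.Tendsto (fun n : ℕ => wq q ((n : ℤ) + j)) Filter.atTop (nhds Q) := by
  obtain ⟨Q, hQ, hT⟩ := tendsto_prod q hq
  have hT' := (hT.inv₀ hQ)
  refine ⟨Q⁻¹, inv_ne_zero hQ, fun j => ?_⟩
  have h2 : Filter.Tendsto (fun n : ℕ => ((n : ℤ) + j).toNat) Filter.atTop Filter.atTop := by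
    rw [Filter.tendsto_atTop_atTop]
    intro b
    exact ⟨b + j.natAbs, fun a ha => by omega⟩
  refine (hT'.comp h2).congr' ?_
  filter_upwards [Filter.eventually_ge_atTop j.natAbs] with n hn
  simp only [Function.comp, wq]
  rw [if_pos (by omega)]

noncomputable def bq (τ : ℂ) (n j : ℤ) : ℂ := cc τ j * wq (e τ) (n - j) * wq (e τ) (n + 1 + j)

lemma bq_rec (τ : ℂ) (hτ : 0 < τ.im) (n j : ℤ) :
    (1 - (e τ)^(2*n+2)) * (1 - (e τ)^(2*n+3)) * bq τ (n+1) j =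
    (1 + (e τ)^(2*n+2)) * bq τ n j - (e τ)^(n+1) * (bq τ n (j-1) + bq τ n (j+1)) := by
  have hq := norm_q τ hτ
  have hq0 := e_ne_zero τ
  unfold bq
  rw [cc_pred, cc_succ]
  set q := e τ
  have a1 : wq q (n - j) = (1 - q^(n+1-j)) * wq q (n+1-j) := by
    rw [← wq_rec q hq]; congr 1; ring
  have a2 : wq q (n + 1 + j) = (1 - q^(n+2+j)) * wq q (n+2+j) := by
    rw [← wq_rec q hq]; congr 1; ring
  have a3 : wq q (n + 1 + (j-1)) = (1 - q^(n+1+j)) * wq q (n+1+j) := by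
    rw [← wq_rec q hq]; congr 1; ring
  have a4 : wq q (n - (j+1)) = (1 - q^(n-j)) * wq q (n-j) := by
    rw [← wq_rec q hq]; congr 1; ring
  have a5 : n - (j - 1) = n + 1 - j := by ring
  have a6 : n + 1 + (j+1) = n + 2 + j := by ring
  have a7 : n + 1 + 1 + j = n + 2 + j := by ring
  rw [a3, a4, a5, a6, a7, a1, a2]
  generalize wq q (n+1-j) = a
  generalize wq q (n+2+j) = c
  rw [show (2*n+2 : ℤ) = n + n + 2 by ring, show (2*n+3 : ℤ) = n + n + 3 by ring]
  simp only [zpow_add₀ hq0, zpow_sub₀ hq0, zpow_neg, zpow_one, zpow_ofNat]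
  have hj : q^j ≠ 0 := zpow_ne_zero _ hq0
  generalize q^j = J at *
  generalize q^n = M
  field_simp
  ring

lemma eta3_ne_zero (τ : ℂ) (hτ : 0 < τ.im) : eta3 τ ≠ 0 := by
  have hq := norm_q τ hτ
  obtain ⟨C, hC0, hC⟩ := wq_bound (e τ) hq
  obtain ⟨Q, hQ, hT⟩ := wq_tendsto (e τ) hq
  have hbound : ∀ n j : ℤ, ‖((j:ℂ) + 1/2) * bq τ n j‖ ≤ (|(j:ℝ) + 1/2|^1 * ‖cc τ j‖) * (C * C) := by
    intro n j
    unfold bq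
    rw [norm_mul, norm_mul, norm_mul]
    have : ‖(j:ℂ) + 1/2‖ = |(j:ℝ) + 1/2| := by
      rw [show (j:ℂ) + 1/2 = (((j:ℝ) + 1/2 : ℝ) : ℂ) by push_cast; ring, Complex.norm_real, Real.norm_eq_abs]
    rw [this, pow_one, mul_assoc, mul_assoc]
    gcongr
    · exact hC _
    · exact hC _
  have hsum := (summable_pow_cc τ hτ 1).mul_right (C * C)
  have hsumb : ∀ n, Summable (fun j : ℤ => ((j:ℂ) + 1/2) * bq τ n j) := fun n =>
    Summable.of_norm_bounded hsum (hbound n)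
  have hsum0 := (summable_pow_cc τ hτ 0).mul_right (C * C)
  have hsumb0 : ∀ n, Summable (fun j : ℤ => bq τ n j) := fun n => by
    refine Summable.of_norm_bounded hsum0 (fun j => ?_)
    unfold bq
    rw [norm_mul, norm_mul, pow_zero, one_mul, mul_assoc]
    gcongr
    · exact hC _
    · exact hC _
  set L : ℤ → ℂ := fun n => ∑' j : ℤ, ((j:ℂ) + 1/2) * bq τ n j with hL
  have hrec : ∀ n, (1 - (e τ)^(2*n+2)) * (1 - (e τ)^(2*n+3)) * L (n+1) =
      (1 - (e τ)^(n+1))^2 * L n := by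
    intro n
    have s1 : HasSum (fun j : ℤ => ((j:ℂ) + 1/2) * bq τ n j) (L n) := (hsumb n).hasSum
    have s0 := (hsumb0 n).hasSum
    have sm := (Equiv.subRight (1:ℤ)).hasSum_iff.2 s1
    have sp := (Equiv.addRight (1:ℤ)).hasSum_iff.2 s1
    have sm0 := (Equiv.subRight (1:ℤ)).hasSum_iff.2 s0
    have sp0 := (Equiv.addRight (1:ℤ)).hasSum_iff.2 s0
    have s2 := ((hsumb (n+1)).hasSum).mul_left ((1 - (e τ)^(2*n+2)) * (1 - (e τ)^(2*n+3)))
    have s3 := (s1.mul_left (1 + (e τ)^(2*n+2))).sub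
      (((sm.add sm0).add (sp.sub sp0)).mul_left ((e τ)^(n+1)))
    have := s2.unique (s3.congr_fun ?_)
    · rw [this]
      rw [show (2*n+2 : ℤ) = (n + 1) + (n+1) by ring, zpow_add₀ (e_ne_zero τ)]
      ring
    · intro j
      have hb := bq_rec τ hτ n j
      simp only [Function.comp, Equiv.subRight_apply, Equiv.coe_addRight]
      push_cast
      linear_combination ((j:ℂ) + 1/2) * hb
  have hne : ∀ k : ℕ, 1 - (e τ)^((k:ℤ)+1) ≠ 0 := fun k => by
    have := one_sub_pow_ne (e τ) hq k
    exact_mod_cast this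
  set P : ℕ → ℂ := fun n => ∏ i ∈ Finset.range n, (1 - (e τ)^(i+1)) with hP
  have hLP : ∀ n : ℕ, L n * P (2*n+1) = L 0 * P 1 * (P n)^2 := by
    intro n
    induction n with
    | zero => simp [hP]
    | succ n ih =>
      have h := hrec n
      have p1 : P (2*(n+1)+1) = P (2*n+1) * (1 - (e τ)^(2*(n:ℤ)+2)) * (1 - (e τ)^(2*(n:ℤ)+3)) := by
        simp only [hP]
        rw [show 2*(n+1)+1 = 2*n+1+1+1 by ring, Finset.prod_range_succ, Finset.prod_range_succ]
        congr 2
      have p2 : P (n+1) = P n * (1 - (e τ)^((n:ℤ)+1)) := by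
        simp only [hP]
        rw [Finset.prod_range_succ]
        congr 2
      rw [p1, p2]
      push_cast
      linear_combination P (2*n+1) * h + (1 - (e τ)^((n:ℤ)+1))^2 * ih
  have hL0 : L 0 * P 1 = cc τ 0 := by
    have h1 : L 0 = ∑ j ∈ ({0, -1} : Finset ℤ), ((j:ℂ) + 1/2) * bq τ 0 j := by
      apply tsum_eq_sum
      intro j hj
      simp only [Finset.mem_insert, Finset.mem_singleton, not_or] at hj
      rcases lt_or_gt_of_ne hj.1 with h | h
      · have : wq (e τ) (0 + 1 + j) = 0 := by
          unfold wq; rw [if_neg (by omega)]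
        simp only [bq, this, mul_zero]
      · have : wq (e τ) (0 - j) = 0 := by
          unfold wq; rw [if_neg (by omega)]
        simp only [bq, this, mul_zero, zero_mul]
    rw [h1, Finset.sum_pair (by decide)]
    have hc := cc_neg τ 0
    norm_num at hc
    have hn := hne 0
    simp [bq, hc, wq, hP]
    norm_num at hn
    field_simp
    ring
  obtain ⟨Q', hQ', hTP⟩ := tendsto_prod (e τ) hq
  have hLlim : Filter.Tendsto (fun n : ℕ => L n) Filter.atTop
      (nhds (∑' j : ℤ, ((j:ℂ) + 1/2) * (cc τ j * Q * Q))) := by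
    refine tendsto_tsum_of_dominated_convergence hsum (fun j => ?_) (Filter.Eventually.of_forall fun n j => hbound n j)
    refine Filter.Tendsto.const_mul _ ?_
    unfold bq
    refine ((hT (-j)).const_mul (cc τ j)).mul ?_ 
    refine (hT (1+j)).congr (fun n => by congr 1; ring)
  have hodd : Filter.Tendsto (fun n : ℕ => 2*n+1) Filter.atTop Filter.atTop := by
    rw [Filter.tendsto_atTop_atTop]; exact fun b => ⟨b, fun a ha => by omega⟩
  have e1 := hLlim.mul (hTP.comp hodd)
  have e2 := (hTP.pow 2).const_mul (cc τ 0)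
  have e3 := tendsto_nhds_unique e1 (e2.congr (fun n => by
    have := hLP n; rw [hL0] at this; exact this.symm))
  intro h0
  rw [eta3_eq] at h0
  have h0' : ∑' m : ℤ, ((m : ℂ) + 1/2) * cc τ m = 0 := by
    simpa using h0
  have : ∑' j : ℤ, ((j:ℂ) + 1/2) * (cc τ j * Q * Q) = 0 := by
    rw [show (fun j : ℤ => ((j:ℂ) + 1/2) * (cc τ j * Q * Q)) = fun j : ℤ => (((j:ℂ) + 1/2) * cc τ j) * (Q * Q) by
      funext j; ring, tsum_mul_right, h0', zero_mul]
  rw [this, zero_mul] at e3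
  exact hQ' (by simpa [cc, e_ne_zero] using e3.symm)

open Complex MeasureTheory
open scoped Classical

lemma gauss_int : Integrable (fun t : ℝ => Real.exp (-t^2)) := by
  have := integrable_exp_neg_mul_sq (b := 1) one_pos
  simpa using this

lemma gauss_Ioi : ∫ t in Set.Ioi (0:ℝ), Real.exp (-t^2) = Real.sqrt Real.pi / 2 := by
  have := integral_gaussian_Ioi 1
  simpa using this

lemma erfc_zero : erfc 0 = 1 := by
  unfold erfc
  rw [gauss_Ioi]
  have : Real.sqrt Real.pi ≠ 0 := (Real.sqrt_pos.2 Real.pi_pos).ne'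
  field_simp

lemma erfc_nonneg (x : ℝ) : 0 ≤ erfc x := by
  unfold erfc
  have : 0 ≤ ∫ t in Set.Ioi x, Real.exp (-t^2) := integral_nonneg (fun t => (Real.exp_pos _).le)
  positivity

lemma erfc_le (x : ℝ) (hx : 0 ≤ x) : erfc x ≤ Real.exp (-x^2) := by
  have h1 : ∫ t in Set.Ioi x, Real.exp (-t^2) ≤ Real.exp (-x^2) * (Real.sqrt Real.pi / 2) := by
    rw [← gauss_Ioi, ← integral_const_mul, ← integral_indicator measurableSet_Ioi,
      ← integral_indicator measurableSet_Ioi,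
      ← integral_add_right_eq_self (fun t => (Set.Ioi x).indicator (fun t => Real.exp (-t^2)) t) x]
    apply integral_mono
    · exact (gauss_int.indicator measurableSet_Ioi).comp_add_right x
    · exact (gauss_int.const_mul _).indicator measurableSet_Ioi
    · intro s
      by_cases hs : 0 < s
      · simp only [Set.indicator, Set.mem_Ioi, lt_add_iff_pos_left, hs, if_true]
        rw [← Real.exp_add]
        apply Real.exp_le_exp.2
        nlinarith
      · simp [Set.indicator, hs]
  unfold erfc
  have h2 : 0 < Real.sqrt Real.pi := Real.sqrt_pos.2 Real.pi_pos
  calc _ ≤ 2 / Real.sqrt Real.pi * (Real.exp (-x^2) * (Real.sqrt Real.pi / 2)) := by gcongr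
    _ = _ := by field_simp

lemma erfc_hasDerivAt (x : ℝ) : HasDerivAt erfc (-(2 / Real.sqrt Real.pi) * Real.exp (-x^2)) x := by
  have h : erfc = fun x => (2 / Real.sqrt Real.pi) *
      ((∫ t in Set.Ioi (0:ℝ), Real.exp (-t^2)) - ∫ t in (0:ℝ)..x, Real.exp (-t^2)) := by
    funext y
    unfold erfc
    congr 1
    rw [eq_sub_iff_add_eq, add_comm]
    exact intervalIntegral.integral_interval_add_Ioi gauss_int.integrableOn gauss_int.integrableOn
  rw [h]
  have hc : Continuous (fun t : ℝ => Real.exp (-t^2)) := by fun_prop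
  have := (intervalIntegral.integral_hasDerivAt_right (hc.intervalIntegrable 0 x)
    (hc.stronglyMeasurableAtFilter _ _) hc.continuousAt)
  refine ((this.const_sub (∫ t in Set.Ioi (0:ℝ), Real.exp (-t^2))).const_mul (2 / Real.sqrt Real.pi)).congr_deriv ?_
  ring

lemma erfc_continuous : Continuous erfc :=
  continuous_iff_continuousAt.2 (fun x => (erfc_hasDerivAt x).continuousAt)

/-- half of scaled erfc -/
noncomputable def Hs (v s : ℝ) : ℝ := erfc (Real.sqrt (2 * Real.pi * v) * s) / 2

lemma Hs_zero (v : ℝ) : Hs v 0 = 1/2 := by simp [Hs, erfc_zero]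

lemma Hs_hasDerivAt (v : ℝ) (hv : 0 < v) (s : ℝ) :
    HasDerivAt (Hs v) (-(Real.sqrt (2 * v)) * Real.exp (-2 * Real.pi * v * s^2)) s := by
  have h1 : HasDerivAt (fun s : ℝ => Real.sqrt (2 * Real.pi * v) * s) (Real.sqrt (2 * Real.pi * v)) s := by
    simpa using (hasDerivAt_id s).const_mul (Real.sqrt (2 * Real.pi * v))
  have h2 := ((erfc_hasDerivAt (Real.sqrt (2 * Real.pi * v) * s)).comp s h1).div_const 2
  unfold Hs
  refine h2.congr_deriv ?_
  have h3 : (Real.sqrt (2 * Real.pi * v) * s)^2 = 2 * Real.pi * v * s^2 := by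
    rw [mul_pow, Real.sq_sqrt (by positivity)]
  rw [h3]
  have h4 : Real.sqrt (2 * Real.pi * v) = Real.sqrt (2 * v) * Real.sqrt Real.pi := by
    rw [← Real.sqrt_mul (by positivity)]; congr 1; ring
  rw [h4]
  have h5 : Real.sqrt Real.pi ≠ 0 := (Real.sqrt_pos.2 Real.pi_pos).ne'
  field_simp

lemma Hs_nonneg (v s : ℝ) : 0 ≤ Hs v s := by unfold Hs; have := erfc_nonneg (Real.sqrt (2 * Real.pi * v) * s); positivity

lemma Hs_le (v : ℝ) (hv : 0 < v) (s : ℝ) (hs : 0 ≤ s) : Hs v s ≤ Real.exp (-2 * Real.pi * v * s^2) := by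
  unfold Hs
  have h := erfc_le (Real.sqrt (2 * Real.pi * v) * s) (by positivity)
  rw [mul_pow, Real.sq_sqrt (by positivity)] at h
  have h0 := erfc_nonneg (Real.sqrt (2 * Real.pi * v) * s)
  calc _ ≤ erfc (Real.sqrt (2 * Real.pi * v) * s) := by linarith
    _ ≤ _ := h
    _ = _ := by ring_nf

lemma Hs_continuous (v : ℝ) : Continuous (Hs v) := by
  unfold Hs
  exact (erfc_continuous.comp (by fun_prop)).div_const 2

lemma e_continuous : Continuous e := by unfold e; fun_prop

/-- the Gaussian weight -/
noncomputable def gw (τ : ℂ) (x : ℝ) : ℂ := e (-(x : ℂ)^2 * τ / 2)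

lemma gw_continuous (τ : ℂ) : Continuous (gw τ) := by
  unfold gw; exact e_continuous.comp (by fun_prop)

lemma norm_gw (τ : ℂ) (x : ℝ) : ‖gw τ x‖ = Real.exp (Real.pi * τ.im * x^2) := by
  unfold gw
  rw [norm_e]; congr 1
  rw [show -(x:ℂ)^2 * τ / 2 = ((-x^2/2 : ℝ) : ℂ) * τ by push_cast; ring, Complex.im_ofReal_mul]
  ring

lemma gstar_eq (τ : ℂ) (x : ℝ) : gstar τ x = gw τ x * (Real.sign x : ℂ) * (Hs τ.im |x| : ℂ) := by
  unfold gstar gw Hs; push_cast; ring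

noncomputable def tm (τ : ℂ) (n : ℕ) (x : ℝ) : ℂ :=
  gw τ x * (Real.sign x : ℂ) * ((max ((n:ℝ) + 1/2 - |x|) 0 : ℝ) : ℂ) * cc τ n

lemma abs_sign_le (x : ℝ) : ‖(Real.sign x : ℂ)‖ ≤ 1 := by
  rcases Real.sign_apply_eq x with h | h | h <;> simp [h]

lemma norm_tm_le (τ : ℂ) (hτ : 0 < τ.im) (n : ℕ) (x : ℝ) :
    ‖tm τ n x‖ ≤ max ((n:ℝ) + 1/2 - |x|) 0 *
      Real.exp (-(Real.pi * τ.im * (((n:ℝ) + 1/2 - |x|) * ((n:ℝ) + 1/2 + |x|)))) := by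
  unfold tm
  rw [norm_mul, norm_mul, norm_mul, norm_gw, norm_cc,
    Complex.norm_of_nonneg (le_max_right ((n:ℝ) + 1/2 - |x|) 0)]
  have h1 : Real.exp (-(Real.pi * τ.im * (((n:ℝ) + 1/2 - |x|) * ((n:ℝ) + 1/2 + |x|)))) =
    Real.exp (Real.pi * τ.im * x^2) * Real.exp (-Real.pi * τ.im * (((n:ℤ):ℝ) + 1/2)^2) := by
    rw [← Real.exp_add]; congr 1; push_cast
    have := sq_abs x
    linear_combination (-Real.pi * τ.im) * (-this)
  rw [h1]
  have h2 := abs_sign_le x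
  have h3 : 0 ≤ max ((n:ℝ) + 1/2 - |x|) 0 := le_max_right _ _
  calc _ ≤ Real.exp (Real.pi * τ.im * x^2) * 1 * max ((n:ℝ) + 1/2 - |x|) 0 *
        Real.exp (-Real.pi * τ.im * (((n:ℤ):ℝ) + 1/2)^2) := by gcongr
    _ = _ := by ring

lemma tsum_if_eq (τ : ℂ) (x : ℝ) :
    (∑' m : ℤ, if |x| < (m : ℝ) + 1/2 then
      (((m : ℝ) + 1/2 - |x| : ℝ) : ℂ) * e (((m : ℂ) + 1/2)^2 / 2 * τ + ((m : ℂ) + 1/2) / 2)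
    else 0) = ∑' n : ℕ, ((max ((n:ℝ) + 1/2 - |x|) 0 : ℝ) : ℂ) * cc τ n := by
  have h : ∀ n : ℕ, ((max ((n:ℝ) + 1/2 - |x|) 0 : ℝ) : ℂ) * cc τ n =
      (fun m : ℤ => if |x| < (m : ℝ) + 1/2 then
      (((m : ℝ) + 1/2 - |x| : ℝ) : ℂ) * e (((m : ℂ) + 1/2)^2 / 2 * τ + ((m : ℂ) + 1/2) / 2)
    else 0) ((n : ℕ) : ℤ) := by
    intro n
    simp only [cc]
    split_ifs with h
    · rw [max_eq_left]
      · simp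
      · push_cast at h; linarith
    · rw [max_eq_right]
      · simp
      · push_cast at h; linarith
  rw [tsum_congr h]
  symm
  refine Function.Injective.tsum_eq (f := fun m : ℤ => if |x| < (m : ℝ) + 1/2 then
      (((m : ℝ) + 1/2 - |x| : ℝ) : ℂ) * e (((m : ℂ) + 1/2)^2 / 2 * τ + ((m : ℂ) + 1/2) / 2)
    else 0) (g := fun n : ℕ => (n:ℤ)) (Nat.cast_injective (R := ℤ)) ?_
  intro m hm
  rw [Function.mem_support] at hm
  have : |x| < (m:ℝ) + 1/2 := by
    by_contra hc; exact hm (if_neg hc)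
  have h3 : (-1:ℝ) < m := by have := abs_nonneg x; linarith
  have h4 : (-1:ℤ) < m := by exact_mod_cast h3
  exact ⟨m.toNat, by simp; omega⟩

lemma gplus_eq (τ : ℂ) (x : ℝ) : gplus τ x = (1 / (Complex.I * eta3 τ)) * ∑' n : ℕ, tm τ n x := by
  unfold gplus
  rw [tsum_if_eq]
  unfold tm
  simp_rw [mul_assoc]
  rw [tsum_mul_left, tsum_mul_left]
  unfold gw
  ring

lemma gfun_eq (τ : ℂ) (x : ℝ) : gfun τ x = (1 / (Complex.I * eta3 τ)) * (∑' n : ℕ, tm τ n x)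
    - gw τ x * (Real.sign x : ℂ) * (Hs τ.im |x| : ℂ) := by
  unfold gfun; rw [gplus_eq, gstar_eq]

lemma summable_max_cc (τ : ℂ) (hτ : 0 < τ.im) (x : ℝ) :
    Summable (fun n : ℕ => ((max ((n:ℝ) + 1/2 - |x|) 0 : ℝ) : ℂ) * cc τ n) := by
  refine Summable.of_norm_bounded (summable_pow_cc_nat τ hτ 1) (fun n => ?_)
  rw [norm_mul, Complex.norm_real, Real.norm_eq_abs, abs_of_nonneg (le_max_right _ _), pow_one]
  gcongr
  apply max_le
  · have := abs_nonneg x; linarith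
  · positivity

lemma summable_tm (τ : ℂ) (hτ : 0 < τ.im) (x : ℝ) : Summable (fun n : ℕ => tm τ n x) := by
  unfold tm
  simp_rw [mul_assoc]
  exact ((summable_max_cc τ hτ x).mul_left _).mul_left _

/-- the sum of `M c_M` over positive half-integers -/
lemma sum_half (τ : ℂ) (hτ : 0 < τ.im) :
    HasSum (fun n : ℕ => ((n:ℂ) + 1/2) * cc τ n) (Complex.I * eta3 τ / 2) := by
  have hs : Summable (fun n : ℕ => ((n:ℂ) + 1/2) * cc τ n) := by
    have := summable_max_cc τ hτ 0
    refine this.congr (fun n => ?_)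
    rw [max_eq_left (by simp; positivity)]
    push_cast; simp
  have h2 : HasSum (fun m : ℤ => ((m:ℂ) + 1/2) * cc τ m)
     ((∑' n : ℕ, ((n:ℂ) + 1/2) * cc τ n) + (∑' n : ℕ, ((n:ℂ) + 1/2) * cc τ n)) := by
    apply HasSum.of_nat_of_neg_add_one
    · simpa using hs.hasSum
    · refine hs.hasSum.congr_fun (fun n => ?_)
      rw [cc_neg]; push_cast; ring
  rw [eta3_eq, h2.tsum_eq]
  convert hs.hasSum using 1
  linear_combination (-∑' n : ℕ, ((n:ℂ) + 1/2) * cc τ n) * Complex.I_sq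

/-- the function `k` with `g = gw * sgn * k(|x|)`. -/
noncomputable def kk (τ : ℂ) (s : ℝ) : ℂ :=
  (1 / (Complex.I * eta3 τ)) * (∑' n : ℕ, ((max ((n:ℝ) + 1/2 - |s|) 0 : ℝ) : ℂ) * cc τ n) - (Hs τ.im |s| : ℂ)

lemma gfun_eq_kk (τ : ℂ) (x : ℝ) : gfun τ x = gw τ x * (Real.sign x : ℂ) * kk τ x := by
  rw [gfun_eq]
  unfold tm kk
  simp_rw [mul_assoc]
  rw [tsum_mul_left, tsum_mul_left]
  ring

lemma kk_continuous (τ : ℂ) (hτ : 0 < τ.im) : Continuous (kk τ) := by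
  unfold kk
  refine Continuous.sub (continuous_const.mul ?_) ?_
  · refine continuous_tsum (fun n => by fun_prop) (summable_pow_cc_nat τ hτ 1) (fun n s => ?_)
    rw [norm_mul, Complex.norm_real, Real.norm_eq_abs, abs_of_nonneg (le_max_right _ _), pow_one]
    gcongr
    apply max_le
    · have := abs_nonneg s; linarith
    · positivity
  · exact Complex.continuous_ofReal.comp ((Hs_continuous _).comp continuous_abs)

lemma kk_zero (τ : ℂ) (hτ : 0 < τ.im) : kk τ 0 = 0 := by
  unfold kk
  have h : ∑' n : ℕ, ((max ((n:ℝ) + 1/2 - |(0:ℝ)|) 0 : ℝ) : ℂ) * cc τ n = Complex.I * eta3 τ / 2 := by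
    rw [← (sum_half τ hτ).tsum_eq]
    apply tsum_congr
    intro n
    rw [max_eq_left (by simp; positivity)]
    push_cast; simp
  rw [h, abs_zero, Hs_zero]
  have := eta3_ne_zero τ hτ
  have := Complex.I_ne_zero
  push_cast
  field_simp
  ring

lemma gfun_continuous (τ : ℂ) (hτ : 0 < τ.im) : Continuous (gfun τ) := by
  have h : gfun τ = fun x => gw τ x * ((Real.sign x : ℂ) * kk τ x) := by
    funext x; rw [gfun_eq_kk]; ring
  rw [h]
  refine (gw_continuous τ).mul ?_
  rw [continuous_iff_continuousAt]
  intro x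
  have hk := (kk_continuous τ hτ).continuousAt (x := x)
  rcases lt_trichotomy x 0 with hx | hx | hx
  · refine (hk.neg).congr ?_
    filter_upwards [gt_mem_nhds hx] with y hy
    simp [Real.sign_of_neg hy]
  · subst hx
    unfold ContinuousAt
    beta_reduce
    rw [kk_zero τ hτ, mul_zero]
    rw [tendsto_zero_iff_norm_tendsto_zero]
    have h2 : Filter.Tendsto (fun x => ‖kk τ x‖) (nhds 0) (nhds 0) := by
      have := hk.norm
      unfold ContinuousAt at this
      beta_reduce at this
      rwa [kk_zero τ hτ, norm_zero] at this
    refine squeeze_zero (fun _ => norm_nonneg _) (fun y => ?_) h2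
    rw [norm_mul]
    have := abs_sign_le y
    nlinarith [norm_nonneg (kk τ y)]
  · refine hk.congr ?_
    filter_upwards [lt_mem_nhds hx] with y hy
    simp [Real.sign_of_pos hy]

open Complex MeasureTheory
open scoped Classical

lemma kk_tendsto (τ : ℂ) (hτ : 0 < τ.im) : Filter.Tendsto (kk τ) (Filter.cocompact ℝ) (nhds 0) := by
  have h1 : Filter.Tendsto (fun s : ℝ => ∑' n : ℕ, ((max ((n:ℝ) + 1/2 - |s|) 0 : ℝ) : ℂ) * cc τ n)
      (Filter.cocompact ℝ) (nhds (∑' n : ℕ, (0:ℂ))) := by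
    refine tendsto_tsum_of_dominated_convergence (summable_pow_cc_nat τ hτ 1) (fun n => ?_) ?_
    · refine tendsto_const_nhds.congr' ?_
      have := (tendsto_norm_cocompact_atTop (E := ℝ)).eventually_ge_atTop ((n:ℝ)+1/2)
      filter_upwards [this] with s hs
      rw [Real.norm_eq_abs] at hs
      rw [max_eq_right (by linarith)]; simp
    · refine Filter.Eventually.of_forall (fun s n => ?_)
      rw [norm_mul, Complex.norm_real, Real.norm_eq_abs, abs_of_nonneg (le_max_right _ _), pow_one]
      gcongr
      apply max_le
      · have := abs_nonneg s; linarith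
      · positivity
  rw [tsum_zero] at h1
  have h2 : Filter.Tendsto (fun s : ℝ => (Hs τ.im |s|)) (Filter.cocompact ℝ) (nhds 0) := by
    have h3 : Filter.Tendsto (fun s : ℝ => Real.exp (-(2 * Real.pi * τ.im * (|s| * |s|)))) (Filter.cocompact ℝ) (nhds 0) := by
      apply Real.tendsto_exp_atBot.comp
      apply Filter.tendsto_neg_atTop_atBot.comp
      apply Filter.Tendsto.const_mul_atTop (by have := Real.pi_pos; positivity)
      have := (tendsto_norm_cocompact_atTop (E := ℝ))
      exact this.atTop_mul_atTop₀ this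
    refine squeeze_zero (fun s => Hs_nonneg _ _) (fun s => ?_) h3
    refine (Hs_le _ hτ _ (abs_nonneg s)).trans (le_of_eq ?_)
    congr 1; ring
  have h4 := (h1.const_mul (1 / (Complex.I * eta3 τ))).sub ((Complex.continuous_ofReal.tendsto 0).comp h2)
  simp only [mul_zero, Complex.ofReal_zero, sub_zero] at h4
  exact h4

lemma sign_measurable : Measurable Real.sign := by
  unfold Real.sign
  exact Measurable.ite measurableSet_Iio measurable_const
    (Measurable.ite measurableSet_Ioi measurable_const measurable_const)

lemma tm_measurable (τ : ℂ) (n : ℕ) : Measurable (tm τ n) := by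
  unfold tm
  refine (((gw_continuous τ).measurable.mul (Complex.measurable_ofReal.comp sign_measurable)).mul ?_).mul_const _
  exact Continuous.measurable (by fun_prop)

lemma tm_bound (τ : ℂ) (hτ : 0 < τ.im) (n : ℕ) (x : ℝ) :
    ‖tm τ n x‖ ≤ (Set.Ioc (-((n:ℝ)+1/2)) ((n:ℝ)+1/2)).indicator (fun x =>
      (2 / (Real.pi * τ.im * ((n:ℝ)+1/2))) * (Real.exp (-(Real.pi * τ.im * ((n:ℝ)+1/2) / 2 * ((n:ℝ)+1/2))) *
        (Real.exp (Real.pi * τ.im * ((n:ℝ)+1/2) / 2 * x) +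
          Real.exp (-(Real.pi * τ.im * ((n:ℝ)+1/2) / 2) * x)))) x := by
  have h := norm_tm_le τ hτ n x
  set M : ℝ := (n:ℝ)+1/2 with hM
  have hMp : 0 < M := by positivity
  set a : ℝ := Real.pi * τ.im * M with ha
  have hap : 0 < a := by have := Real.pi_pos; positivity
  by_cases hx : |x| < M
  · have hx2 := abs_lt.1 hx
    have hmem : x ∈ Set.Ioc (-M) M := ⟨hx2.1, hx2.2.le⟩
    rw [Set.indicator_of_mem hmem]
    refine h.trans ?_
    rw [max_eq_left (by linarith)]
    set s := M - |x| with hs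
    have hsp : 0 < s := by linarith
    have h1 : Real.exp (-(Real.pi * τ.im * (s * (M + |x|)))) ≤ Real.exp (-(a * s)) := by
      apply Real.exp_le_exp.2
      have h0 : 0 ≤ Real.pi * τ.im * (s * |x|) := by have := Real.pi_pos; positivity
      rw [ha]; nlinarith
    have h2 : s ≤ (2/a) * Real.exp (a/2*s) := by
      have := Real.add_one_le_exp (a/2*s)
      calc s = (2/a) * (a/2*s) := by field_simp
        _ ≤ _ := by gcongr; linarith
    have h3 : Real.exp (a/2*|x|) ≤ Real.exp (a/2*x) + Real.exp (-(a/2)*x) := by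
      rcases abs_cases x with ⟨h, _⟩ | ⟨h, _⟩ <;> rw [h]
      · have := Real.exp_pos (-(a/2)*x); linarith
      · have := Real.exp_pos ((a/2)*x)
        rw [show a/2 * -x = -(a/2)*x by ring]; linarith
    calc s * Real.exp (-(Real.pi * τ.im * (s * (M + |x|))))
        ≤ (2/a) * Real.exp (a/2*s) * Real.exp (-(a * s)) := by gcongr
      _ = (2/a) * (Real.exp (-(a/2*M)) * Real.exp (a/2*|x|)) := by
        rw [mul_assoc, ← Real.exp_add, ← Real.exp_add]; congr 2; rw [hs]; ring
      _ ≤ _ := by gcongr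
  · push Not at hx
    rw [max_eq_right (by linarith), zero_mul] at h
    refine h.trans (Set.indicator_nonneg (fun y _ => ?_) _)
    positivity

lemma int_exp_lin (c M : ℝ) (hc : c ≠ 0) : ∫ x in (-M)..M, Real.exp (c * x) =
    (Real.exp (c*M) - Real.exp (-(c*M)))/c := by
  rw [intervalIntegral.integral_comp_mul_left _ hc, integral_exp]
  simp; field_simp

lemma tm_int (τ : ℂ) (hτ : 0 < τ.im) (n : ℕ) :
    Integrable (tm τ n) ∧ ∫ x, ‖tm τ n x‖ ≤ 8 / (Real.pi * τ.im * ((n:ℝ)+1/2))^2 := by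
  have hb := tm_bound τ hτ n
  set M : ℝ := (n:ℝ)+1/2 with hM
  have hMp : 0 < M := by positivity
  set a : ℝ := Real.pi * τ.im * M with ha
  have hap : 0 < a := by have := Real.pi_pos; positivity
  set F : ℝ → ℝ := fun x => (2/a) * (Real.exp (-(a/2*M)) * (Real.exp (a/2*x) + Real.exp (-(a/2)*x))) with hF
  have hFc : Continuous F := by fun_prop
  have hFi : Integrable ((Set.Ioc (-M) M).indicator F) :=
    (integrable_indicator_iff measurableSet_Ioc).2 (hFc.integrableOn_Ioc)
  have hi : Integrable (tm τ n) := hFi.mono' (tm_measurable τ n).aestronglyMeasurable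
    (Filter.Eventually.of_forall hb)
  refine ⟨hi, (integral_mono hi.norm hFi hb).trans ?_⟩
  rw [integral_indicator measurableSet_Ioc, ← intervalIntegral.integral_of_le (by linarith)]
  simp only [hF]
  rw [intervalIntegral.integral_const_mul, intervalIntegral.integral_const_mul,
    intervalIntegral.integral_add (by apply Continuous.intervalIntegrable; fun_prop)
     (by apply Continuous.intervalIntegrable; fun_prop),
    int_exp_lin _ _ (by positivity), int_exp_lin _ _ (by linarith [half_pos hap])]
  have hE : Real.exp (-(a/2*M)) * Real.exp (a/2*M) = 1 := by rw [← Real.exp_add]; simp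
  have hE2 : 0 < Real.exp (-(a/2*M)) := Real.exp_pos _
  have : 2 / a * (Real.exp (-(a/2*M)) * ((Real.exp (a/2*M) - Real.exp (-(a/2*M)))/(a/2) +
     (Real.exp (-(a/2)*M) - Real.exp (-(-(a/2)*M)))/(-(a/2)))) =
     8/a^2 * (1 - Real.exp (-(a/2*M))^2) := by
    rw [show -(-(a/2)*M) = a/2*M by ring, show -(a/2)*M = -(a/2*M) by ring]
    rw [← hE]
    field_simp
    ring
  rw [this]
  have h8 : 0 ≤ 8/a^2 := by positivity
  nlinarith [mul_nonneg h8 (sq_nonneg (Real.exp (-(a/2*M))))]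

lemma summable_tm_int (τ : ℂ) (hτ : 0 < τ.im) : Summable (fun n : ℕ => ∫ x, ‖tm τ n x‖) := by
  have h : Summable (fun n : ℕ => 8 / (Real.pi * τ.im * ((n:ℝ)+1/2))^2) := by
    have h1 : Summable (fun n : ℕ => (1:ℝ) / |(n:ℝ) + 1/2| ^ (2:ℝ)) :=
      Real.summable_one_div_nat_add_rpow (1/2) 2 |>.2 (by norm_num)
    refine (h1.mul_left (8 / (Real.pi * τ.im)^2)).congr (fun n => ?_)
    rw [show (2:ℝ) = ((2:ℕ):ℝ) by norm_num, Real.rpow_natCast, sq_abs]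
    have := Real.pi_pos
    have : (n:ℝ) + 1/2 ≠ 0 := by positivity
    push_cast
    field_simp
  exact Summable.of_nonneg_of_le (fun n => integral_nonneg (fun _ => norm_nonneg _)) (fun n => (tm_int τ hτ n).2) h

/-- non-holomorphic part -/
noncomputable def gst (τ : ℂ) (x : ℝ) : ℂ := gw τ x * (Real.sign x : ℂ) * (Hs τ.im |x| : ℂ)

lemma norm_gst_le (τ : ℂ) (hτ : 0 < τ.im) (x : ℝ) : ‖gst τ x‖ ≤ Real.exp (-(Real.pi * τ.im) * x^2) := by
  unfold gst
  rw [norm_mul, norm_mul, norm_gw, Complex.norm_of_nonneg (Hs_nonneg _ _)]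
  calc _ ≤ Real.exp (Real.pi * τ.im * x^2) * 1 * Real.exp (-2 * Real.pi * τ.im * |x|^2) := by
        gcongr
        · exact Hs_nonneg _ _
        · exact abs_sign_le x
        · exact Hs_le _ hτ _ (abs_nonneg x)
    _ = _ := by rw [mul_one, ← Real.exp_add, sq_abs]; congr 1; ring

lemma gst_measurable (τ : ℂ) : Measurable (gst τ) := by
  unfold gst
  refine (((gw_continuous τ).measurable.mul (Complex.measurable_ofReal.comp sign_measurable)).mul ?_)
  exact (Complex.continuous_ofReal.comp ((Hs_continuous _).comp continuous_abs)).measurable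

lemma gst_integrable (τ : ℂ) (hτ : 0 < τ.im) : Integrable (gst τ) :=
  (integrable_exp_neg_mul_sq (b := Real.pi * τ.im) (by have := Real.pi_pos; positivity)).mono'
    (gst_measurable τ).aestronglyMeasurable (Filter.Eventually.of_forall (norm_gst_le τ hτ))

lemma gfun_eq' (τ : ℂ) : gfun τ = fun x => (1 / (Complex.I * eta3 τ)) * (∑' n : ℕ, tm τ n x) - gst τ x := by
  funext x; rw [gfun_eq]; rfl

lemma sum_tm_integrable (τ : ℂ) (hτ : 0 < τ.im) : Integrable (fun x => ∑' n : ℕ, tm τ n x) := by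
  have hs := summable_tm_int τ hτ
  refine ⟨?_, ?_⟩
  · exact (Measurable.tsum (fun n => tm_measurable τ n)).aestronglyMeasurable
  · rw [hasFiniteIntegral_iff_enorm]
    calc ∫⁻ x, ‖∑' n : ℕ, tm τ n x‖ₑ ≤ ∫⁻ x, ∑' n : ℕ, ‖tm τ n x‖ₑ :=
          lintegral_mono (fun x => enorm_tsum_le_tsum_enorm)
      _ = ∑' n : ℕ, ∫⁻ x, ‖tm τ n x‖ₑ :=
          lintegral_tsum (fun n => (tm_measurable τ n).enorm.aemeasurable)
      _ = ∑' n : ℕ, ENNReal.ofReal (∫ x, ‖tm τ n x‖) := by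
          congr 1; funext n
          rw [ofReal_integral_norm_eq_lintegral_enorm (tm_int τ hτ n).1]
      _ < ⊤ := hs.tsum_ofReal_lt_top

lemma gfun_integrable (τ : ℂ) (hτ : 0 < τ.im) : Integrable (gfun τ) := by
  rw [gfun_eq']
  exact ((sum_tm_integrable τ hτ).const_mul _).sub (gst_integrable τ hτ)

lemma gfun_integral_mul (τ : ℂ) (hτ : 0 < τ.im) (B : ℝ → ℂ) (hB : Continuous B) (C : ℝ) (hC : ∀ x, ‖B x‖ ≤ C)
    (S : ℂ) (hS : HasSum (fun n : ℕ => ∫ x, tm τ n x * B x) S) :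
    ∫ x, gfun τ x * B x = (1 / (Complex.I * eta3 τ)) * S - ∫ x, gst τ x * B x := by
  have hi : ∀ n : ℕ, Integrable (fun x => tm τ n x * B x) := fun n =>
    (tm_int τ hτ n).1.mul_bdd (c := C) hB.aestronglyMeasurable (Filter.Eventually.of_forall hC)
  have hC0 : 0 ≤ C := (norm_nonneg _).trans (hC 0)
  have hs : Summable (fun n : ℕ => ∫ x, ‖tm τ n x * B x‖) := by
    refine Summable.of_nonneg_of_le (fun n => integral_nonneg (fun _ => norm_nonneg _)) (fun n => ?_)
      ((summable_tm_int τ hτ).mul_right C)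
    rw [← integral_mul_const]
    refine integral_mono (hi n).norm ((tm_int τ hτ n).1.norm.mul_const C) (fun x => ?_)
    simp only [norm_mul]
    gcongr; exact hC x
  have h1 := hasSum_integral_of_summable_integral_norm hi hs
  have h2 := h1.unique hS
  have h3 : Integrable (fun x => (1 / (Complex.I * eta3 τ)) * ((∑' n : ℕ, tm τ n x) * B x)) :=
    ((sum_tm_integrable τ hτ).mul_bdd (c := C) hB.aestronglyMeasurable (Filter.Eventually.of_forall hC)).const_mul _
  have h4 : Integrable (fun x => gst τ x * B x) :=
    (gst_integrable τ hτ).mul_bdd (c := C) hB.aestronglyMeasurable (Filter.Eventually.of_forall hC)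
  rw [← h2, ← integral_const_mul, ← integral_sub]
  · congr 1; funext x; rw [gfun_eq', tsum_mul_right]; ring
  · simp_rw [tsum_mul_right]; exact h3
  · exact h4

open Complex MeasureTheory
open scoped Classical

lemma summable_lin_exp (c : ℝ) (hc : 0 < c) : Summable (fun n : ℕ => ((n:ℝ)+1/2) * Real.exp (-c * n)) := by
  have h1 := Real.summable_pow_mul_exp_neg_nat_mul 1 hc
  have h2 := Real.summable_pow_mul_exp_neg_nat_mul 0 hc
  refine (h1.add (h2.mul_left (1/2))).congr (fun n => ?_)
  simp; ring

/-- exponential decay away from the half integers -/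
lemma gfun_decay (τ : ℂ) (hτ : 0 < τ.im) (δ : ℝ) (hδ : 0 < δ) (hδ1 : δ ≤ 1) :
    ∃ K : ℝ, 0 ≤ K ∧ ∀ x : ℝ, (∀ k : ℕ, |x| < (k:ℝ) + 1/2 → δ ≤ (k:ℝ) + 1/2 - |x|) →
      ‖gfun τ x‖ ≤ K * Real.exp (-(Real.pi * τ.im * δ) * |x|) := by
  have hc : 0 < Real.pi * τ.im := by have := Real.pi_pos; positivity
  have hcd : 0 < Real.pi * τ.im * δ := by positivity
  set c := Real.pi * τ.im with hcdef
  have hsum := summable_lin_exp (c*δ) hcd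
  set S := ∑' n : ℕ, ((n:ℝ)+1/2) * Real.exp (-(c*δ) * n) with hS
  have hS0 : 0 ≤ S := tsum_nonneg (fun n => by positivity)
  refine ⟨‖1 / (Complex.I * eta3 τ)‖ * S + Real.exp c, by positivity, fun x hx => ?_⟩
  have ht : ∀ n : ℕ, ‖tm τ n x‖ ≤ (((n:ℝ)+1/2) * Real.exp (-(c*δ) * n)) * Real.exp (-(c*δ)*|x|) := by
    intro n
    refine (norm_tm_le τ hτ n x).trans ?_
    by_cases h : |x| < (n:ℝ) + 1/2
    · rw [max_eq_left (by linarith), mul_assoc ((n:ℝ)+1/2), ← Real.exp_add, ← hcdef]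
      have h1 := hx n h
      have h2 := abs_nonneg x
      gcongr
      · linarith
      · have h3 : 0 ≤ c * (((n:ℝ) + 1/2 - |x| - δ) * ((n:ℝ) + 1/2 + |x|)) := by
          apply mul_nonneg hc.le; apply mul_nonneg <;> [linarith; positivity]
        nlinarith
    · rw [max_eq_right (by linarith), zero_mul]; positivity
  have h1 : ‖∑' n : ℕ, tm τ n x‖ ≤ S * Real.exp (-(c*δ)*|x|) := by
    rw [hS, ← tsum_mul_right]
    exact tsum_of_norm_bounded (hsum.mul_right _).hasSum ht
  have h2 : ‖gst τ x‖ ≤ Real.exp c * Real.exp (-(c*δ)*|x|) := by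
    refine (norm_gst_le τ hτ x).trans ?_
    rw [← Real.exp_add]
    apply Real.exp_le_exp.2
    have h3 : δ * |x| ≤ 1 * |x| := by gcongr
    have h4 := sq_abs x
    have h5 : 0 ≤ c * (1 + |x|^2 - δ * |x|) := by
      apply mul_nonneg hc.le; nlinarith [sq_nonneg (|x|-1)]
    rw [← h4]; linarith
  rw [gfun_eq']
  calc _ ≤ ‖1 / (Complex.I * eta3 τ) * (∑' n : ℕ, tm τ n x)‖ + ‖gst τ x‖ := norm_sub_le _ _
    _ ≤ ‖1 / (Complex.I * eta3 τ)‖ * (S * Real.exp (-(c*δ)*|x|)) + Real.exp c * Real.exp (-(c*δ)*|x|) := by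
      rw [norm_mul]; gcongr
    _ = _ := by ring

open Complex MeasureTheory
open scoped Classical

open scoped SchwartzMap in
/-- The operator `-Φ' + 2πiσxΦ`. -/
noncomputable def Dst (σ : ℂ) (Φ : 𝓢(ℝ, ℂ)) : 𝓢(ℝ, ℂ) :=
  SchwartzMap.smulLeftCLM ℂ (fun x : ℝ => 2 * (Real.pi : ℂ) * Complex.I * σ * (x : ℂ)) Φ
    - SchwartzMap.derivCLM ℂ ℂ Φ

open scoped SchwartzMap in
lemma Dst_apply (σ : ℂ) (Φ : 𝓢(ℝ, ℂ)) (x : ℝ) :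
    Dst σ Φ x = 2 * (Real.pi : ℂ) * Complex.I * σ * (x : ℂ) * Φ x - deriv Φ x := by
  unfold Dst
  have h : Function.HasTemperateGrowth (fun x : ℝ => 2 * (Real.pi : ℂ) * Complex.I * σ * (x : ℂ)) := by
    fun_prop
  rw [sub_apply, SchwartzMap.smulLeftCLM_apply_apply h, SchwartzMap.derivCLM_apply]
  simp

lemma gw_hasDerivAt (σ : ℂ) (x : ℝ) :
    HasDerivAt (gw σ) (-(2 * (Real.pi : ℂ) * Complex.I * σ * (x : ℂ)) * gw σ x) x := by
  unfold gw e
  have h1 : HasDerivAt (fun x : ℝ => (x:ℂ)) 1 x := Complex.ofRealCLM.hasDerivAt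
  have h2 := ((((h1.pow 2).neg.mul_const σ).div_const 2).const_mul (2 * (Real.pi : ℂ) * Complex.I)).cexp
  refine h2.congr_deriv ?_
  simp
  ring

open scoped SchwartzMap in
lemma gw_mul_hasDerivAt (σ : ℂ) (Φ : 𝓢(ℝ, ℂ)) (x : ℝ) :
    HasDerivAt (fun x => gw σ x * Φ x) (-(gw σ x * Dst σ Φ x)) x := by
  refine ((gw_hasDerivAt σ x).mul Φ.differentiableAt.hasDerivAt).congr_deriv ?_
  rw [Dst_apply]; ring

lemma tent_ibp (χ χ1 χ2 : ℝ → ℂ) (h1 : ∀ x, HasDerivAt χ (χ1 x) x) (h2 : ∀ x, HasDerivAt χ1 (χ2 x) x)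
    (hc : Continuous χ2) (M : ℝ) (hM : 0 < M) :
    ∫ x : ℝ, (Real.sign x : ℂ) * ((max (M - |x|) 0 : ℝ) : ℂ) * χ2 x = χ M - χ (-M) - 2 * M * χ1 0 := by
  have hx : ∀ x : ℝ, HasDerivAt (fun x : ℝ => (x:ℂ)) 1 x := fun x => Complex.ofRealCLM.hasDerivAt
  have hp : ∫ x in (0:ℝ)..M, (Real.sign x : ℂ) * ((max (M - |x|) 0 : ℝ) : ℂ) * χ2 x = χ M - M * χ1 0 - χ 0 := by
    have : ∫ x in (0:ℝ)..M, (Real.sign x : ℂ) * ((max (M - |x|) 0 : ℝ) : ℂ) * χ2 x =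
        ∫ x in (0:ℝ)..M, ((M:ℂ) - x) * χ2 x := by
      rw [intervalIntegral.integral_of_le hM.le, intervalIntegral.integral_of_le hM.le]
      refine setIntegral_congr_fun measurableSet_Ioc (fun x hx => ?_)
      rw [Real.sign_of_pos hx.1, abs_of_pos hx.1, max_eq_left (by linarith [hx.2])]
      push_cast; ring
    rw [this, intervalIntegral.integral_eq_sub_of_hasDerivAt (f := fun x : ℝ => ((M:ℂ) - x) * χ1 x + χ x)]
    · simp; ring
    · intro x _
      refine ((((hx x).const_sub (M:ℂ)).mul (h2 x)).add (h1 x)).congr_deriv ?_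
      ring
    · apply Continuous.intervalIntegrable; fun_prop
  have hn : ∫ x in (-M)..0, (Real.sign x : ℂ) * ((max (M - |x|) 0 : ℝ) : ℂ) * χ2 x = χ 0 - χ (-M) - M * χ1 0 := by
    have : ∫ x in (-M)..0, (Real.sign x : ℂ) * ((max (M - |x|) 0 : ℝ) : ℂ) * χ2 x =
        ∫ x in (-M)..0, -((M:ℂ) + x) * χ2 x := by
      rw [intervalIntegral.integral_of_le (by linarith), intervalIntegral.integral_of_le (by linarith),
        integral_Ioc_eq_integral_Ioo, integral_Ioc_eq_integral_Ioo]
      refine setIntegral_congr_fun measurableSet_Ioo (fun x hx => ?_)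
      rw [Real.sign_of_neg hx.2, abs_of_neg hx.2, max_eq_left (by linarith [hx.1])]
      push_cast; ring
    rw [this, intervalIntegral.integral_eq_sub_of_hasDerivAt (f := fun x : ℝ => -((M:ℂ) + x) * χ1 x + χ x)]
    · simp; ring
    · intro x _
      refine ((((hx x).const_add (M:ℂ)).fun_neg.mul (h2 x)).add (h1 x)).congr_deriv ?_
      ring
    · apply Continuous.intervalIntegrable; fun_prop
  have hii : ∀ a b : ℝ, IntervalIntegrable (fun x => (Real.sign x : ℂ) * ((max (M - |x|) 0 : ℝ) : ℂ) * χ2 x) volume a b := by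
    intro a b
    simp_rw [mul_assoc]
    have hcc : Continuous (fun x => ((max (M - |x|) 0 : ℝ) : ℂ) * χ2 x) := by fun_prop
    have hm : Measurable (fun x => (Real.sign x : ℂ)) := Complex.measurable_ofReal.comp sign_measurable
    exact ⟨(hcc.intervalIntegrable a b).1.bdd_mul (c := 1) hm.aestronglyMeasurable (Filter.Eventually.of_forall abs_sign_le),
      (hcc.intervalIntegrable a b).2.bdd_mul (c := 1) hm.aestronglyMeasurable (Filter.Eventually.of_forall abs_sign_le)⟩
  have hs : Function.support (fun x => (Real.sign x : ℂ) * ((max (M - |x|) 0 : ℝ) : ℂ) * χ2 x) ⊆ Set.Ioc (-M) M := by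
    intro x hx
    by_contra hc
    apply hx
    have : M ≤ |x| := by
      by_contra h
      push Not at h
      have := abs_lt.1 h
      exact hc ⟨this.1, this.2.le⟩
    simp [max_eq_right (show M - |x| ≤ 0 by linarith)]
  rw [← intervalIntegral.integral_eq_integral_of_support_subset hs,
    ← intervalIntegral.integral_add_adjacent_intervals (hii (-M) 0) (hii 0 M), hp, hn]
  ring

lemma gw_mul_exp (σ : ℂ) (x : ℝ) : ((Real.exp (-2 * Real.pi * σ.im * x^2) : ℝ) : ℂ) * gw σ x
    = gw (starRingEnd ℂ σ) x := by
  unfold gw e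
  rw [Complex.ofReal_exp, ← Complex.exp_add]
  congr 1
  have : σ = σ.re + σ.im * Complex.I := (Complex.re_add_im σ).symm
  have h2 : starRingEnd ℂ σ = σ.re - σ.im * Complex.I := by
    apply Complex.ext <;> simp
  rw [h2]
  push_cast
  linear_combination (-(Real.pi:ℂ) * Complex.I * x^2) * this + (-2 * (Real.pi:ℂ) * σ.im * x^2) * Complex.I_sq

lemma HE_hasDerivAt (v : ℝ) (s : ℝ) : HasDerivAt (fun s : ℝ => ((Real.exp (-2 * Real.pi * v * s^2) : ℝ) : ℂ))
   (-(4 * Real.pi * v * s) * ((Real.exp (-2 * Real.pi * v * s^2) : ℝ) : ℂ)) s := by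
  have h : HasDerivAt (fun s : ℝ => Real.exp (-2 * Real.pi * v * s^2))
     (Real.exp (-2 * Real.pi * v * s^2) * (-2 * Real.pi * v * (2 * s))) s := by
    refine (((hasDerivAt_pow 2 s).const_mul (-2 * Real.pi * v)).exp).congr_deriv ?_
    simp
  refine h.ofReal_comp.congr_deriv ?_
  push_cast; ring

lemma exp_tendsto (c : ℝ) (hc : 0 < c) : Filter.Tendsto (fun x : ℝ => Real.exp (-c * x^2)) (Filter.cocompact ℝ) (nhds 0) := by
  have h : Filter.Tendsto (fun s : ℝ => Real.exp (-(c * (|s| * |s|)))) (Filter.cocompact ℝ) (nhds 0) := by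
    apply Real.tendsto_exp_atBot.comp
    apply Filter.tendsto_neg_atTop_atBot.comp
    apply Filter.Tendsto.const_mul_atTop hc
    have := (tendsto_norm_cocompact_atTop (E := ℝ))
    exact this.atTop_mul_atTop₀ this
  refine h.congr (fun x => ?_)
  rw [abs_mul_abs_self]; congr 1; ring

open scoped SchwartzMap in
lemma schwartz_bdd (Φ : 𝓢(ℝ, ℂ)) : ∃ C : ℝ, 0 ≤ C ∧ ∀ x, ‖Φ x‖ ≤ C :=
  ⟨_, apply_nonneg _ Φ, fun x => SchwartzMap.norm_le_seminorm ℂ Φ x⟩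

open scoped SchwartzMap in
lemma Hs_gw_tendsto (σ : ℂ) (hσ : 0 < σ.im) (Φ : 𝓢(ℝ, ℂ)) :
    Filter.Tendsto (fun x : ℝ => (Hs σ.im |x| : ℂ) * (gw σ x * Φ x)) (Filter.cocompact ℝ) (nhds 0) := by
  obtain ⟨C, hC0, hC⟩ := schwartz_bdd Φ
  rw [tendsto_zero_iff_norm_tendsto_zero]
  have h := (exp_tendsto (Real.pi * σ.im) (by have := Real.pi_pos; positivity)).mul_const C
  rw [zero_mul] at h
  refine squeeze_zero (fun _ => norm_nonneg _) (fun x => ?_) h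
  rw [norm_mul, norm_mul, norm_gw, Complex.norm_of_nonneg (Hs_nonneg _ _), ← mul_assoc]
  gcongr
  · calc _ ≤ Real.exp (-2 * Real.pi * σ.im * |x|^2) * Real.exp (Real.pi * σ.im * x^2) := by
          gcongr; exact Hs_le _ hσ _ (abs_nonneg x)
      _ = _ := by rw [← Real.exp_add, sq_abs]; congr 1; ring
  · exact hC x

open scoped SchwartzMap in
lemma E_gw_tendsto (σ : ℂ) (hσ : 0 < σ.im) (Φ : 𝓢(ℝ, ℂ)) :
    Filter.Tendsto (fun x : ℝ => ((Real.exp (-2 * Real.pi * σ.im * x^2) : ℝ) : ℂ) * (gw σ x * Φ x))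
      (Filter.cocompact ℝ) (nhds 0) := by
  obtain ⟨C, hC0, hC⟩ := schwartz_bdd Φ
  rw [tendsto_zero_iff_norm_tendsto_zero]
  have h := (exp_tendsto (Real.pi * σ.im) (by have := Real.pi_pos; positivity)).mul_const C
  rw [zero_mul] at h
  refine squeeze_zero (fun _ => norm_nonneg _) (fun x => ?_) h
  rw [norm_mul, norm_mul, norm_gw, Complex.norm_of_nonneg (Real.exp_pos _).le, ← mul_assoc]
  gcongr
  · exact le_of_eq (by rw [← Real.exp_add]; congr 1; ring)
  · exact hC x

open Complex MeasureTheory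
open scoped Classical

open scoped SchwartzMap in
lemma xgw_integrable (σ : ℂ) (hσ : 0 < σ.im) (Φ : 𝓢(ℝ, ℂ)) :
    Integrable (fun x : ℝ => (x:ℂ) * (gw (starRingEnd ℂ σ) x * Φ x)) := by
  have h : Function.HasTemperateGrowth (fun x : ℝ => (x : ℂ)) := by fun_prop
  have h1 := (SchwartzMap.smulLeftCLM ℂ (fun x : ℝ => (x : ℂ)) Φ).integrable (μ := volume)
  have h2 := h1.bdd_mul (c := 1) (f := gw (starRingEnd ℂ σ)) (gw_continuous _).aestronglyMeasurable
    (Filter.Eventually.of_forall (fun x => by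
      rw [norm_gw]
      apply Real.exp_le_one_iff.2
      have : 0 ≤ Real.pi * σ.im * x^2 := by have := Real.pi_pos; positivity
      simp only [Complex.conj_im]; linarith))
  refine h2.congr (Filter.Eventually.of_forall (fun x => ?_))
  simp only [SchwartzMap.smulLeftCLM_apply_apply h, smul_eq_mul]
  ring

open scoped SchwartzMap in
lemma gst_ibp (σ : ℂ) (hσ : 0 < σ.im) (Φ : 𝓢(ℝ, ℂ)) :
    ∫ x, gst σ x * Dst σ (Dst σ Φ) x = gw σ 0 * Dst σ Φ 0 +
      4 * Real.pi * σ.im * (Real.sqrt (2 * σ.im) : ℂ) * ∫ x : ℝ, (x:ℂ) * (gw (starRingEnd ℂ σ) x * Φ x) := by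
  set v := σ.im with hv
  set B := Dst σ (Dst σ Φ) with hB
  have hBb : Integrable (fun x => gst σ x * B x) := by
    obtain ⟨C, _, hC⟩ := schwartz_bdd B
    exact (gst_integrable σ hσ).mul_bdd (c := C) B.continuous.aestronglyMeasurable (Filter.Eventually.of_forall hC)
  have hxi := xgw_integrable σ hσ Φ
  set κ : ℂ := 4 * Real.pi * v * (Real.sqrt (2 * v) : ℂ) with hκ
  -- total integrand
  set T : ℝ → ℂ := fun x => gst σ x * B x - κ * ((x:ℂ) * (gw (starRingEnd ℂ σ) x * Φ x)) with hT
  have hTi : Integrable T := hBb.sub (hxi.const_mul κ)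
  have hχ := gw_mul_hasDerivAt σ Φ
  have hχ1 : ∀ x, HasDerivAt (fun x => gw σ x * Dst σ Φ x) (-(gw σ x * B x)) x := gw_mul_hasDerivAt σ (Dst σ Φ)
  have hE := HE_hasDerivAt v
  have hH : ∀ x, HasDerivAt (fun s => (Hs v s : ℂ)) ((-(Real.sqrt (2 * v)) * Real.exp (-2 * Real.pi * v * x^2) : ℝ) : ℂ) x :=
    fun x => (Hs_hasDerivAt v hσ x).ofReal_comp
  set W : ℝ → ℂ := fun x => -((Hs v x : ℂ) * (gw σ x * Dst σ Φ x)) +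
     (Real.sqrt (2 * v) : ℂ) * (((Real.exp (-2 * Real.pi * v * x^2) : ℝ) : ℂ) * (gw σ x * Φ x)) with hW
  set V : ℝ → ℂ := fun x => ((Hs v (-x) : ℂ) * (gw σ x * Dst σ Φ x)) +
     (Real.sqrt (2 * v) : ℂ) * (((Real.exp (-2 * Real.pi * v * x^2) : ℝ) : ℂ) * (gw σ x * Φ x)) with hV
  have hHn : ∀ x, HasDerivAt (fun s => (Hs v (-s) : ℂ)) ((Real.sqrt (2 * v) * Real.exp (-2 * Real.pi * v * x^2) : ℝ) : ℂ) x := by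
    intro x
    have := ((Hs_hasDerivAt v hσ (-x)).comp x (hasDerivAt_neg x)).ofReal_comp
    refine this.congr_deriv ?_
    simp
  have hWd : ∀ x, HasDerivAt W ((Hs v x : ℂ) * (gw σ x * B x) - κ * ((x:ℂ) * (gw (starRingEnd ℂ σ) x * Φ x))) x := by
    intro x
    refine ((((hH x).mul (hχ1 x)).fun_neg).add (((hE x).mul (hχ x)).const_mul _)).congr_deriv ?_
    rw [← gw_mul_exp, hκ]
    push_cast
    ring
  have hVd : ∀ x, HasDerivAt V (-(Hs v (-x) : ℂ) * (gw σ x * B x) - κ * ((x:ℂ) * (gw (starRingEnd ℂ σ) x * Φ x))) x := by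
    intro x
    refine ((((hHn x).mul (hχ1 x))).add (((hE x).mul (hχ x)).const_mul _)).congr_deriv ?_
    rw [← gw_mul_exp, hκ]
    push_cast
    ring
  have hW0 : Filter.Tendsto W Filter.atTop (nhds 0) := by
    have h1 := ((Hs_gw_tendsto σ hσ (Dst σ Φ)).neg.add ((E_gw_tendsto σ hσ Φ).const_mul (Real.sqrt (2 * v) : ℂ))).mono_left
      atTop_le_cocompact
    rw [neg_zero, mul_zero, zero_add] at h1
    refine h1.congr' ?_
    filter_upwards [Filter.eventually_ge_atTop (0:ℝ)] with x hx
    simp only [hW, abs_of_nonneg hx, hv]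
  have hV0 : Filter.Tendsto V Filter.atBot (nhds 0) := by
    have h1 := ((Hs_gw_tendsto σ hσ (Dst σ Φ)).add ((E_gw_tendsto σ hσ Φ).const_mul (Real.sqrt (2 * v) : ℂ))).mono_left
      atBot_le_cocompact
    rw [mul_zero, zero_add] at h1
    refine h1.congr' ?_
    filter_upwards [Filter.eventually_le_atBot (0:ℝ)] with x hx
    simp only [hV, abs_of_nonpos hx, hv]
  have hTp : ∀ x ∈ Set.Ioi (0:ℝ), T x = (Hs v x : ℂ) * (gw σ x * B x) - κ * ((x:ℂ) * (gw (starRingEnd ℂ σ) x * Φ x)) := by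
    intro x hx
    simp only [hT, gst]
    rw [Real.sign_of_pos hx, abs_of_pos hx]
    push_cast; ring
  have hTn : ∀ x ∈ Set.Iio (0:ℝ), T x = -(Hs v (-x) : ℂ) * (gw σ x * B x) - κ * ((x:ℂ) * (gw (starRingEnd ℂ σ) x * Φ x)) := by
    intro x hx
    simp only [hT, gst]
    rw [Real.sign_of_neg hx, abs_of_neg hx]
    push_cast; ring
  have hIp : ∫ x in Set.Ioi (0:ℝ), T x = 0 - W 0 := by
    rw [setIntegral_congr_fun measurableSet_Ioi hTp]
    refine MeasureTheory.integral_Ioi_of_hasDerivAt_of_tendsto (hWd 0).continuousAt.continuousWithinAt (fun x _ => hWd x) ?_ hW0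
    exact (hTi.integrableOn).congr_fun hTp measurableSet_Ioi
  have hIn : ∫ x in Set.Iic (0:ℝ), T x = V 0 - 0 := by
    rw [integral_Iic_eq_integral_Iio, setIntegral_congr_fun measurableSet_Iio hTn, ← integral_Iic_eq_integral_Iio]
    refine MeasureTheory.integral_Iic_of_hasDerivAt_of_tendsto (hVd 0).continuousAt.continuousWithinAt (fun x _ => hVd x) ?_ hV0
    rw [integrableOn_Iic_iff_integrableOn_Iio]
    exact (hTi.integrableOn).congr_fun hTn measurableSet_Iio
  have hI : ∫ x, T x = gw σ 0 * Dst σ Φ 0 := by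
    rw [← intervalIntegral.integral_Iic_add_Ioi (b := (0:ℝ)) hTi.integrableOn hTi.integrableOn, hIp, hIn]
    simp only [hW, hV, neg_zero, Hs_zero]
    push_cast; ring
  rw [← hI]
  simp only [hT]
  rw [integral_sub hBb (hxi.const_mul κ), integral_const_mul]
  ring

/-- the shifted half integers theta pairing -/
noncomputable def hs (f : ℝ → ℂ) (m : ℤ) : ℂ := e (((m:ℂ) + 1/2)/2) * f ((m:ℝ) + 1/2)

lemma norm_e_half (m : ℤ) : ‖e (((m:ℂ) + 1/2)/2)‖ = 1 := by
  have := norm_e_real (((m:ℝ) + 1/2)/2)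
  push_cast at this; exact this

lemma summable_shift {f : ℝ → ℂ} (hf : f =O[Filter.cocompact ℝ] fun x => |x| ^ (-2:ℝ)) :
    Summable (fun m : ℤ => f ((m:ℝ) + 1/2)) := by
  have h1 : Summable (fun m : ℤ => |(m:ℝ) + 1/2| ^ (-2:ℝ)) := by
    have : Summable (fun m : ℤ => (1:ℝ) / |(m:ℝ) + 1/2| ^ (2:ℝ)) :=
      Real.summable_one_div_int_add_rpow (1/2) 2 |>.2 (by norm_num)
    refine this.congr (fun m => ?_)
    rw [Real.rpow_neg (abs_nonneg _), one_div]
  have ht : Filter.Tendsto (fun m : ℤ => (m:ℝ) + 1/2) Filter.cofinite (Filter.cocompact ℝ) := by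
    have h := Int.tendsto_coe_cofinite
    exact (Homeomorph.addRight (1/2:ℝ)).isClosedEmbedding.tendsto_cocompact.comp h
  exact summable_of_isBigO h1 (hf.comp_tendsto ht)

lemma summable_hs {f : ℝ → ℂ} (hf : f =O[Filter.cocompact ℝ] fun x => |x| ^ (-2:ℝ)) :
    Summable (hs f) := by
  refine Summable.of_norm ((summable_shift hf).norm.congr (fun m => ?_))
  rw [hs, norm_mul, norm_e_half, one_mul]

open scoped SchwartzMap in
lemma summable_hs_schwartz (Φ : 𝓢(ℝ, ℂ)) : Summable (hs Φ) :=
  summable_hs (Φ.isBigO_cocompact_rpow (-2))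

lemma cc_mul_gw (σ : ℂ) (m : ℤ) : cc σ m * gw σ ((m:ℝ) + 1/2) = e (((m:ℂ) + 1/2)/2) := by
  unfold cc gw
  rw [← e_add]; congr 1; push_cast; ring

lemma gw_neg (σ : ℂ) (x : ℝ) : gw σ (-x) = gw σ x := by simp [gw]

open scoped SchwartzMap in
lemma identA (σ : ℂ) (hσ : 0 < σ.im) (Φ : 𝓢(ℝ, ℂ)) :
    ∫ x, gfun σ x * Dst σ (Dst σ Φ) x = (1 / (Complex.I * eta3 σ)) * ∑' m : ℤ, hs Φ m
      - 4 * Real.pi * σ.im * (Real.sqrt (2 * σ.im) : ℂ) * ∫ x : ℝ, (x:ℂ) * (gw (starRingEnd ℂ σ) x * Φ x) := by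
  obtain ⟨C, _, hC⟩ := schwartz_bdd (Dst σ (Dst σ Φ))
  have hχ := gw_mul_hasDerivAt σ Φ
  have hχ1 : ∀ x, HasDerivAt (fun x => -(gw σ x * Dst σ Φ x)) (gw σ x * Dst σ (Dst σ Φ) x) x := fun x => by
    simpa using (gw_mul_hasDerivAt σ (Dst σ Φ) x).fun_neg
  have hn : ∀ n : ℕ, ∫ x, tm σ n x * Dst σ (Dst σ Φ) x =
      (hs Φ n + hs Φ (-((n:ℤ) + 1))) + 2 * (gw σ 0 * Dst σ Φ 0) * (((n:ℂ) + 1/2) * cc σ n) := by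
    intro n
    have h := tent_ibp _ _ _ hχ hχ1 ((gw_continuous σ).mul (Dst σ (Dst σ Φ)).continuous) ((n:ℝ)+1/2) (by positivity)
    have h2 : ∫ x, tm σ n x * Dst σ (Dst σ Φ) x = cc σ n * ∫ x : ℝ, (Real.sign x : ℂ) * ((max ((n:ℝ)+1/2 - |x|) 0 : ℝ) : ℂ) * (gw σ x * Dst σ (Dst σ Φ) x) := by
      rw [← integral_const_mul]; congr 1; funext x; unfold tm; ring
    rw [h2, h, gw_neg]
    have h3 := cc_mul_gw σ n
    have h4 := cc_mul_gw σ (-((n:ℤ)+1))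
    rw [cc_neg] at h4
    unfold hs
    rw [← h3, ← h4]
    push_cast
    rw [show (-((n:ℝ) + 1) + 1/2) = -((n:ℝ)+1/2) by ring, gw_neg]
    ring
  have hS := ((summable_hs_schwartz Φ).hasSum.nat_add_neg_add_one).add ((sum_half σ hσ).mul_left (2 * (gw σ 0 * Dst σ Φ 0)))
  rw [← funext hn] at hS
  rw [gfun_integral_mul σ hσ _ (Dst σ (Dst σ Φ)).continuous C hC _ hS, gst_ibp σ hσ]
  have := eta3_ne_zero σ hσ
  have := Complex.I_ne_zero
  field_simp
  ring

open Complex MeasureTheory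
open scoped Classical

open scoped FourierTransform

lemma fourier_e (f : ℝ → ℂ) (w : ℝ) : 𝓕 f w = ∫ v : ℝ, e (((-(v * w) : ℝ)) : ℂ) * f v := by
  rw [Real.fourier_real_eq_integral_exp_smul]
  congr 1; funext v
  unfold e
  rw [smul_eq_mul]; congr 2; push_cast; ring

open scoped SchwartzMap in
lemma fourier_Dst (τ : ℂ) (hτ : τ ≠ 0) (φ : 𝓢(ℝ, ℂ)) : 𝓕 (Dst τ φ) = τ • Dst (-1/τ) (𝓕 φ) := by
  have hx : Function.HasTemperateGrowth (fun x : ℝ => (x : ℂ)) := by fun_prop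
  have hxi : Integrable (fun x : ℝ => (x:ℂ) * φ x) := by
    refine (SchwartzMap.smulLeftCLM ℂ (fun x : ℝ => (x : ℂ)) φ).integrable.congr (Filter.Eventually.of_forall (fun x => ?_))
    simp [SchwartzMap.smulLeftCLM_apply_apply hx]
  have hdi : Integrable (deriv φ) := by
    refine (SchwartzMap.derivCLM ℂ ℂ φ).integrable.congr (Filter.Eventually.of_forall (fun x => ?_))
    simp
  have h1 := Real.fourier_deriv φ.integrable φ.differentiable hdi
  have h2 := Real.deriv_fourier φ.integrable (by simpa using hxi)
  ext w
  rw [smul_apply, Dst_apply, SchwartzMap.fourier_coe, SchwartzMap.fourier_coe, h2]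
  have h3 := congrFun h1 w
  have h4 : (Dst τ φ : ℝ → ℂ) = fun x : ℝ => 2 * (Real.pi : ℂ) * Complex.I * τ * (x : ℂ) * φ x - deriv φ x := by
    funext x; rw [Dst_apply]
  have hin : ∀ (f : ℝ → ℂ), Integrable f → Integrable (fun v : ℝ => e (((-(v * w) : ℝ)) : ℂ) * f v) := by
    intro f hf
    refine hf.bdd_mul (c := 1) ?_ (Filter.Eventually.of_forall (fun v => (norm_e_real _).le))
    exact (e_continuous.comp (by fun_prop)).aestronglyMeasurable
  rw [h4]
  rw [fourier_e] at h3
  rw [fourier_e]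
  simp_rw [mul_sub]
  rw [integral_sub, h3]
  · have h5 : ∫ v : ℝ, e (((-(v * w) : ℝ)) : ℂ) * (2 * (Real.pi : ℂ) * Complex.I * τ * (v : ℂ) * φ v) =
      (2 * (Real.pi : ℂ) * Complex.I * τ) * ∫ v : ℝ, e (((-(v * w) : ℝ)) : ℂ) * (v * φ v) := by
      rw [← integral_const_mul]; congr 1; funext v; ring
    have h6 : ∫ v : ℝ, e (((-(v * w) : ℝ)) : ℂ) * ((-2 * (Real.pi : ℂ) * Complex.I * (v : ℂ)) • φ v) =
      (-2 * (Real.pi : ℂ) * Complex.I) * ∫ v : ℝ, e (((-(v * w) : ℝ)) : ℂ) * (v * φ v) := by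
      rw [← integral_const_mul]; congr 1; funext v; rw [smul_eq_mul]; ring
    rw [h5, fourier_e (fun x : ℝ => (-2 * (Real.pi : ℂ) * Complex.I * (x : ℂ)) • φ x), h6]
    generalize ∫ v : ℝ, e (((-(v * w) : ℝ)) : ℂ) * (v * φ v) = J
    simp only [smul_eq_mul]
    field_simp
    ring
  · refine hin (fun v : ℝ => 2 * (Real.pi : ℂ) * Complex.I * τ * (v : ℂ) * φ v) ?_
    refine (hxi.const_mul (2 * (Real.pi : ℂ) * Complex.I * τ)).congr (Filter.Eventually.of_forall (fun x => ?_))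
    simp only; ring
  · exact hin _ hdi

open scoped SchwartzMap in
lemma Dst_smul (σ c : ℂ) (Φ : 𝓢(ℝ, ℂ)) : Dst σ (c • Φ) = c • Dst σ Φ := by
  unfold Dst
  rw [map_smul, map_smul, smul_sub]

open scoped SchwartzMap in
lemma fourier_Dst2 (τ : ℂ) (hτ : τ ≠ 0) (φ : 𝓢(ℝ, ℂ)) :
    𝓕 (Dst τ (Dst τ φ)) = (τ^2) • Dst (-1/τ) (Dst (-1/τ) (𝓕 φ)) := by
  rw [fourier_Dst τ hτ, fourier_Dst τ hτ, Dst_smul, smul_smul, sq]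

lemma poisson_half (f : ℝ → ℂ) (hc : Continuous f) (h1 : f =O[Filter.cocompact ℝ] fun x => |x| ^ (-2:ℝ))
    (h2 : 𝓕 f =O[Filter.cocompact ℝ] fun x => |x| ^ (-2:ℝ)) :
    ∑' m : ℤ, hs f m = Complex.I * ∑' m : ℤ, hs (𝓕 f) m := by
  set F : ℝ → ℂ := fun x => e ((x / 2 : ℝ) : ℂ) * f x with hF
  have hFc : Continuous F := (e_continuous.comp (by fun_prop)).mul hc
  have hFF : 𝓕 F = fun y => 𝓕 f (y - 1/2) := by
    funext y
    rw [fourier_e, fourier_e]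
    congr 1; funext v
    simp only [hF]
    rw [← mul_assoc, ← e_add]; congr 2; push_cast; ring
  have hF1 : F =O[Filter.cocompact ℝ] fun x => |x| ^ (-2:ℝ) := by
    refine (Asymptotics.IsBigO.of_norm_left ?_)
    refine h1.norm_left.congr_left (fun x => ?_)
    rw [hF, norm_mul, norm_e_real, one_mul]
  have hF2 : 𝓕 F =O[Filter.cocompact ℝ] fun x => |x| ^ (-2:ℝ) := by
    rw [hFF]
    have ht : Filter.Tendsto (fun y : ℝ => y - 1/2) (Filter.cocompact ℝ) (Filter.cocompact ℝ) :=
      (Homeomorph.subRight (1/2:ℝ)).isClosedEmbedding.tendsto_cocompact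
    refine (h2.comp_tendsto ht).trans ?_
    refine Asymptotics.IsBigO.of_bound 4 ?_
    have hev := (tendsto_norm_cocompact_atTop (E := ℝ)).eventually_ge_atTop 1
    filter_upwards [hev] with y hy
    rw [Real.norm_eq_abs] at hy
    simp only [Function.comp]
    have h3 : |y|/2 ≤ |y - 1/2| := by
      have := abs_sub_abs_le_abs_sub y (1/2)
      rw [abs_of_pos (by norm_num : (0:ℝ) < 1/2)] at this
      linarith
    rw [Real.norm_of_nonneg (by positivity), Real.norm_of_nonneg (by positivity),
      Real.rpow_neg (by positivity), Real.rpow_neg (by positivity), Real.rpow_two, Real.rpow_two]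
    have h4 : (|y|/2)^2 ≤ |y-1/2|^2 := by gcongr
    have h5 : (|y-1/2|^2)⁻¹ ≤ ((|y|/2)^2)⁻¹ := by
      apply inv_anti₀ _ h4; positivity
    refine h5.trans (le_of_eq ?_)
    field_simp; norm_num
  have hP := Real.tsum_eq_tsum_fourier_of_rpow_decay hFc one_lt_two hF1 hF2 (1/2)
  have hL : ∑' m : ℤ, hs f m = ∑' n : ℤ, F (1/2 + n) := by
    congr 1; funext m
    simp only [hs, hF]
    rw [add_comm (1/2:ℝ)]; congr 2; push_cast; ring
  rw [hL, hP, ← tsum_mul_left, hFF, ← (Equiv.addRight (1:ℤ)).tsum_eq]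
  congr 1; funext m
  rw [fourier_coe_apply, hs]
  simp only [Equiv.coe_addRight]
  push_cast
  rw [show ((m:ℝ) + 1 - 1/2) = m + 1/2 by ring, ← mul_assoc,
    show Complex.I * e (((m:ℂ)+1/2)/2) = e (1/4 + ((m:ℂ)+1/2)/2) by rw [e_add, e_quarter], mul_comm]
  congr 1
  unfold e; congr 1; ring

open Complex MeasureTheory
open scoped Classical

open scoped FourierTransform

lemma gw_neg_eq (τ : ℂ) : gw (-τ) = fun x : ℝ => Complex.exp (-(Real.pi:ℂ) * (-Complex.I * τ) * (x:ℂ)^2) := by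
  funext x; unfold gw e; congr 1; ring

lemma b_re (τ : ℂ) (hτ : 0 < τ.im) : 0 < (-Complex.I * τ).re := by simpa using hτ

lemma ne_zero_of_im (τ : ℂ) (hτ : 0 < τ.im) : τ ≠ 0 := by
  rintro rfl; simp at hτ

lemma fourier_Ga (τ : ℂ) (hτ : 0 < τ.im) :
    𝓕 (gw (-τ)) = fun t : ℝ => 1 / (-Complex.I * τ) ^ (1/2:ℂ) * gw (1/τ) t := by
  rw [gw_neg_eq, fourier_gaussian_pi (b_re τ hτ)]
  funext t
  congr 1
  unfold gw e; congr 1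
  have := ne_zero_of_im τ hτ
  have := Complex.I_ne_zero
  field_simp
  linear_combination ((t:ℂ)^2) * Complex.I_sq

lemma norm_gw_neg (τ : ℂ) (x : ℝ) : ‖gw (-τ) x‖ = Real.exp (-(Real.pi * τ.im) * x^2) := by
  rw [norm_gw]; congr 1; simp

lemma Ga_integrable (τ : ℂ) (hτ : 0 < τ.im) : Integrable (gw (-τ)) := by
  refine (integrable_exp_neg_mul_sq (b := Real.pi * τ.im) (by have := Real.pi_pos; positivity)).mono'
    (gw_continuous _).aestronglyMeasurable (Filter.Eventually.of_forall (fun x => (norm_gw_neg τ x).le))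

lemma xGa_integrable (τ : ℂ) (hτ : 0 < τ.im) : Integrable (fun x : ℝ => (x:ℂ) * gw (-τ) x) := by
  refine (integrable_mul_exp_neg_mul_sq (b := Real.pi * τ.im) (by have := Real.pi_pos; positivity)).mono
    ((Complex.continuous_ofReal.mul (gw_continuous _))).aestronglyMeasurable (Filter.Eventually.of_forall (fun x => ?_))
  rw [norm_mul, norm_mul, norm_gw_neg, Complex.norm_real, Real.norm_of_nonneg (Real.exp_pos _).le]

lemma fourier_xGa (τ : ℂ) (hτ : 0 < τ.im) :
    𝓕 (fun x : ℝ => (x:ℂ) * gw (-τ) x) =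
      fun t : ℝ => (1/τ) * (1 / (-Complex.I * τ) ^ (1/2:ℂ)) * ((t:ℂ) * gw (1/τ) t) := by
  funext w
  have h := Real.hasDerivAt_fourier (Ga_integrable τ hτ) (by simpa using xGa_integrable τ hτ) w
  rw [fourier_Ga τ hτ] at h
  have h2 := ((gw_hasDerivAt (1/τ) w).const_mul (1 / (-Complex.I * τ) ^ (1/2:ℂ)))
  have h3 := h.unique h2
  rw [fourier_e] at h3 ⊢
  have h4 : ∫ v : ℝ, e (((-(v * w) : ℝ)) : ℂ) * ((-2 * (Real.pi : ℂ) * Complex.I * (v : ℂ)) • gw (-τ) v) =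
      (-2 * (Real.pi : ℂ) * Complex.I) * ∫ v : ℝ, e (((-(v * w) : ℝ)) : ℂ) * (v * gw (-τ) v) := by
      rw [← integral_const_mul]; congr 1; funext v; rw [smul_eq_mul]; ring
  rw [h4] at h3
  have hne : (-2 * (Real.pi : ℂ) * Complex.I) ≠ 0 := by
    have := Complex.I_ne_zero
    have : (Real.pi:ℂ) ≠ 0 := by exact_mod_cast Real.pi_ne_zero
    exact mul_ne_zero (mul_ne_zero (by norm_num) this) Complex.I_ne_zero
  apply mul_left_cancel₀ hne
  rw [h3]; ring

lemma xGa_isBigO (τ : ℂ) (hτ : 0 < τ.im) :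
    (fun x : ℝ => (x:ℂ) * gw (-τ) x) =O[Filter.cocompact ℝ] fun x => |x| ^ (-2:ℝ) := by
  have h1 : gw (-τ) =O[Filter.cocompact ℝ] fun x : ℝ => |x| ^ (-3:ℝ) := by
    rw [gw_neg_eq]
    have hre : (-(Real.pi:ℂ) * (-Complex.I * τ)).re < 0 := by
      have := mul_pos Real.pi_pos hτ
      simp; linarith
    have := (cexp_neg_quadratic_isLittleO_abs_rpow_cocompact hre 0 (-3)).isBigO
    simpa using this
  have h2 : (fun x : ℝ => (x:ℂ)) =O[Filter.cocompact ℝ] fun x : ℝ => |x| := by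
    refine Asymptotics.IsBigO.of_bound 1 (Filter.Eventually.of_forall (fun x => ?_))
    simp
  refine (h2.mul h1).congr' Filter.EventuallyEq.rfl ?_
  have hev := (tendsto_norm_cocompact_atTop (E := ℝ)).eventually_ge_atTop 1
  filter_upwards [hev] with y hy
  rw [Real.norm_eq_abs] at hy
  rw [← Real.rpow_one_add' (by positivity) (by norm_num)]; norm_num

lemma neg_inv_im (τ : ℂ) (hτ : 0 < τ.im) : 0 < (-1/τ).im := by
  rw [neg_div, one_div, Complex.neg_im, Complex.inv_im]
  have := Complex.normSq_pos.2 (ne_zero_of_im τ hτ)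
  rw [neg_div, neg_neg]; positivity

lemma hs_xGa (τ : ℂ) (m : ℤ) : hs (fun x : ℝ => (x:ℂ) * gw (-τ) x) m = ((m:ℂ) + 1/2) * cc τ m := by
  unfold hs gw cc
  have : ((m:ℂ)+1/2)^2/2*τ + ((m:ℂ)+1/2)/2 = ((m:ℂ)+1/2)/2 + -((m:ℂ)+1/2)^2 * -τ/2 := by ring
  rw [this, e_add]
  push_cast; ring

/-- the square root -/
noncomputable def rt (τ : ℂ) : ℂ := (-Complex.I * τ) ^ (1/2:ℂ)

lemma rt_sq (τ : ℂ) : rt τ ^ 2 = -Complex.I * τ := by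
  unfold rt
  rw [← Complex.cpow_nat_mul]; norm_num

lemma rt_ne (τ : ℂ) (hτ : 0 < τ.im) : rt τ ≠ 0 := by
  intro h
  have := rt_sq τ
  rw [h] at this
  have h2 := ne_zero_of_im τ hτ
  have := Complex.I_ne_zero
  simp_all

lemma eta3_transf (τ : ℂ) (hτ : 0 < τ.im) : eta3 (-1/τ) = -Complex.I * τ * rt τ * eta3 τ := by
  have hσ := neg_inv_im τ hτ
  have h2 : (fun t : ℝ => (1/τ) * (1 / (-Complex.I * τ) ^ (1/2:ℂ)) * ((t:ℂ) * gw (1/τ) t)) =O[Filter.cocompact ℝ]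
      fun x => |x| ^ (-2:ℝ) := by
    have := (xGa_isBigO (-1/τ) hσ).const_mul_left ((1/τ) * (1 / (-Complex.I * τ) ^ (1/2:ℂ)))
    rw [show -(-1/τ) = 1/τ by ring] at this
    exact this
  have h := poisson_half (fun x : ℝ => (x:ℂ) * gw (-τ) x) (Complex.continuous_ofReal.mul (gw_continuous (-τ))) (xGa_isBigO τ hτ)
    (by rw [fourier_xGa τ hτ]; exact h2)
  rw [fourier_xGa τ hτ] at h
  have h3 : ∀ m : ℤ, hs (fun t : ℝ => (1/τ) * (1 / (-Complex.I * τ) ^ (1/2:ℂ)) * ((t:ℂ) * gw (1/τ) t)) m =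
     (1/τ) * (1 / rt τ) * (((m:ℂ) + 1/2) * cc (-1/τ) m) := by
    intro m
    rw [← hs_xGa, show -(-1/τ) = 1/τ by ring]
    unfold hs rt; ring
  rw [tsum_congr h3, tsum_congr (hs_xGa τ), tsum_mul_left] at h
  rw [eta3_eq, eta3_eq, h]
  generalize (∑' x : ℤ, ((x:ℂ) + 1/2) * cc (-1/τ) x) = S
  have := rt_ne τ hτ
  have := ne_zero_of_im τ hτ
  field_simp
  linear_combination (-S) * Complex.I_sq

open Complex MeasureTheory
open scoped Classical
open scoped FourierTransform

lemma fourier_pair (f g : ℝ → ℂ) (hf : Integrable f) (hg : Integrable g) :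
    ∫ x, 𝓕 f x * g x = ∫ x, f x * 𝓕 g x := by
  simpa using! VectorFourier.integral_bilin_fourierIntegral_eq_flip (ContinuousLinearMap.mul ℂ ℂ) (L := innerₗ ℝ)
    Real.continuous_fourierChar continuous_inner hf hg

lemma rt_scale (τ : ℂ) (hτ : 0 < τ.im) (r : ℝ) (hr : 0 < r) : rt (((r^2 : ℝ) : ℂ) * τ) = r * rt τ := by
  unfold rt
  have h1 : -Complex.I * τ ≠ 0 := by
    have := ne_zero_of_im τ hτ
    simp [this]
  have hr2 : 0 < r^2 := by positivity
  have hr0 : (r:ℂ) ≠ 0 := by exact_mod_cast hr.ne'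
  rw [show -Complex.I * (((r^2 : ℝ) : ℂ) * τ) = ((r^2 : ℝ) : ℂ) * (-Complex.I * τ) by ring]
  rw [Complex.cpow_def_of_ne_zero (by simp [hr0] ; exact fun h => by simp [h] at hτ), Complex.cpow_def_of_ne_zero h1, Complex.log_ofReal_mul hr2 h1,
    add_mul, Complex.exp_add, Real.log_pow]
  congr 1
  rw [show ((((2:ℕ):ℝ) * Real.log r : ℝ) : ℂ) * (1/2) = (Real.log r : ℂ) by push_cast; ring]
  rw [← Complex.ofReal_exp, Real.exp_log hr]

open scoped SchwartzMap in
lemma schwartz_isBigO (φ : 𝓢(ℝ, ℂ)) : (φ : ℝ → ℂ) =O[Filter.cocompact ℝ] fun x => |x| ^ (-2:ℝ) :=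
  φ.isBigO_cocompact_rpow (-2)

open scoped SchwartzMap in
lemma pairing (τ : ℂ) (hτ : 0 < τ.im) (φ : 𝓢(ℝ, ℂ)) :
    ∫ x, 𝓕 (gfun (-1/τ)) x * Dst τ (Dst τ φ) x = Complex.I * rt τ * ∫ x, gfun τ x * Dst τ (Dst τ φ) x := by
  have hσ := neg_inv_im τ hτ
  have hτ0 := ne_zero_of_im τ hτ
  set r : ℝ := ‖τ‖ with hr
  have hr0 : 0 < r := norm_pos_iff.2 hτ0
  have hcr : (starRingEnd ℂ) τ * τ = (r:ℂ)^2 := Complex.conj_mul' τ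
  have hrc : (r:ℂ) ≠ 0 := by exact_mod_cast hr0.ne'
  have hcτ : (starRingEnd ℂ) τ ≠ 0 := (map_ne_zero _).2 hτ0
  set τ' : ℂ := (((r⁻¹)^2 : ℝ) : ℂ) * τ with hτ'
  have hτ'i : 0 < τ'.im := by
    rw [hτ', Complex.im_ofReal_mul]; positivity
  have hτ'inv : 1/τ' = (starRingEnd ℂ) τ := by
    rw [hτ']; push_cast
    field_simp; linear_combination (-1:ℂ)*hcr
  have hcs : (starRingEnd ℂ) (-1/τ) = -τ' := by
    rw [map_div₀, ← hτ'inv]; simp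
  have hsi : (-1/τ).im = τ.im / r^2 := by
    rw [neg_div, one_div, Complex.neg_im, Complex.inv_im, Complex.normSq_eq_norm_sq]; ring
  have hsq : Real.sqrt (2 * (-1/τ).im) = Real.sqrt (2 * τ.im) / r := by
    rw [hsi, ← mul_div_assoc, Real.sqrt_div (by positivity), Real.sqrt_sq hr0.le]
  rw [fourier_pair _ _ (gfun_integrable _ hσ) (Dst τ (Dst τ φ)).integrable]
  rw [← SchwartzMap.fourier_coe, fourier_Dst2 τ hτ0]
  simp only [smul_apply, smul_eq_mul]
  have h1 : ∫ x, gfun (-1/τ) x * (τ^2 * Dst (-1/τ) (Dst (-1/τ) (𝓕 φ)) x) =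
    τ^2 * ∫ x, gfun (-1/τ) x * Dst (-1/τ) (Dst (-1/τ) (𝓕 φ)) x := by
    rw [← integral_const_mul]; congr 1; funext x; ring
  rw [h1, identA _ hσ, identA _ hτ]
  have hp := poisson_half φ φ.continuous (schwartz_isBigO φ) (by rw [← SchwartzMap.fourier_coe]; exact schwartz_isBigO _)
  rw [← SchwartzMap.fourier_coe] at hp
  rw [hp, eta3_transf τ hτ]
  have hJ : ∫ x : ℝ, (x:ℂ) * (gw ((starRingEnd ℂ) (-1/τ)) x * (𝓕 φ) x) =
      (starRingEnd ℂ) τ * r / rt τ * ∫ x : ℝ, (x:ℂ) * (gw ((starRingEnd ℂ) τ) x * φ x) := by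
    have h2 := fourier_pair _ _ (xGa_integrable τ' hτ'i) φ.integrable
    rw [fourier_xGa τ' hτ'i, hτ'inv] at h2
    rw [hcs, SchwartzMap.fourier_coe, ← integral_const_mul]
    have h3 := rt_scale τ hτ r⁻¹ (by positivity)
    rw [← hτ'] at h3
    change ∫ x : ℝ, (starRingEnd ℂ) τ * (1 / rt τ') * _ * _ = _ at h2
    rw [h3] at h2
    simp only [mul_assoc] at h2 ⊢
    rw [← h2]
    congr 1; funext x
    push_cast
    have := rt_ne τ hτ
    field_simp
  rw [hJ, hsq, hsi]
  generalize (∑' m : ℤ, hs (⇑(𝓕 φ : 𝓢(ℝ, ℂ))) m) = S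
  generalize (∫ x : ℝ, (x:ℂ) * (gw ((starRingEnd ℂ) τ) x * φ x)) = J
  have he := eta3_ne_zero τ hτ
  have hrt := rt_ne τ hτ
  have hrs := rt_sq τ
  have hA : τ^2 * (1 / (Complex.I * (-Complex.I * τ * rt τ * eta3 τ)) * S) =
     Complex.I * rt τ * (1 / (Complex.I * eta3 τ) * (Complex.I * S)) := by
    have hI := Complex.I_ne_zero
    field_simp
    rw [hrs]
    linear_combination (τ * S * (Complex.I^2 - 1)) * Complex.I_sq
  have hB : τ^2 * (4 * Real.pi * ((τ.im / r^2 : ℝ) : ℂ) * ((Real.sqrt (2 * τ.im) / r : ℝ) : ℂ) * ((starRingEnd ℂ) τ * r / rt τ * J)) =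
     Complex.I * rt τ * (4 * Real.pi * τ.im * (Real.sqrt (2 * τ.im) : ℂ) * J) := by
    push_cast
    field_simp
    rw [hrs, ← hcr]
    linear_combination (τ^2 * τ.im * (Real.sqrt (2 * τ.im) : ℂ) * (starRingEnd ℂ) τ * J) * Complex.I_sq
  rw [mul_sub, mul_sub, hA, hB]

open Complex MeasureTheory
open scoped Classical
open scoped FourierTransform
open scoped ContDiff

open scoped Convolution in
lemma lemW (U : ℝ → ℂ) (hU : Continuous U) (B : ℝ) (hB : ∀ x, ‖U x‖ ≤ B)
    (h0 : Filter.Tendsto U (Filter.cocompact ℝ) (nhds 0))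
    (h : ∀ ψ : ℝ → ℝ, ContDiff ℝ ∞ ψ → HasCompactSupport ψ → ∫ x, ((deriv (deriv ψ) x : ℝ) : ℂ) * U x = 0) :
    ∀ x, U x = 0 := by
  have key : ∀ ρ : ℝ → ℝ, ContDiff ℝ ∞ ρ → HasCompactSupport ρ → ∀ t, ∫ s, ρ s • U (t - s) = 0 := by
    intro ρ hρ hρc
    have hρ1 : ContDiff ℝ ∞ (deriv ρ) := ((contDiff_infty_iff_deriv (𝕜 := ℝ)).1 hρ).2
    have hd1 := fun t => hρc.hasDerivAt_convolution_left (ContinuousLinearMap.lsmul ℝ ℝ) (μ := volume) (hρ.of_le (by norm_num)) hU.locallyIntegrable t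
    have hd2 := fun t => hρc.deriv.hasDerivAt_convolution_left (ContinuousLinearMap.lsmul ℝ ℝ) (μ := volume) (hρ1.of_le (by norm_num)) hU.locallyIntegrable t
    set F := (ρ ⋆[ContinuousLinearMap.lsmul ℝ ℝ, volume] U) with hF
    set F1 := (deriv ρ ⋆[ContinuousLinearMap.lsmul ℝ ℝ, volume] U) with hF1
    have hz : ∀ t, (deriv (deriv ρ) ⋆[ContinuousLinearMap.lsmul ℝ ℝ, volume] U) t = 0 := by
      intro t
      have h1 := h (fun x => ρ (t - x)) (hρ.comp (contDiff_const.sub contDiff_id))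
        (hρc.comp_homeomorph (Homeomorph.subLeft t))
      have h2 : deriv (fun x => ρ (t - x)) = fun x => - deriv ρ (t - x) := by
        funext x; rw [deriv_comp_const_sub]
      have h3 : deriv (fun x => - deriv ρ (t - x)) = fun x => deriv (deriv ρ) (t - x) := by
        funext x; rw [deriv.fun_neg, deriv_comp_const_sub, neg_neg]
      rw [h2, h3] at h1
      rw [← h1, MeasureTheory.convolution_def,
        ← integral_sub_left_eq_self (fun s => ((deriv (deriv ρ) (t - s) : ℝ) : ℂ) * U s) volume t]
      congr 1; funext s
      simp
    have hF1c : ∀ t, F1 t = F1 0 := by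
      intro t
      refine is_const_of_deriv_eq_zero (fun t => (hd2 t).differentiableAt) (fun t => ?_) t 0
      rw [(hd2 t).deriv, hz]
    have hFa : ∀ t, F t = F 0 + t * F1 0 := by
      intro t
      have hdd : ∀ t, HasDerivAt (fun t : ℝ => F t - (t:ℂ) * F1 0) 0 t := by
        intro t
        have := (hd1 t).sub ((Complex.ofRealCLM.hasDerivAt (x := t)).mul_const (F1 0))
        refine this.congr_deriv ?_
        rw [hF1c t]; simp
      have := is_const_of_deriv_eq_zero (fun t => (hdd t).differentiableAt) (fun t => (hdd t).deriv) t 0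
      simp at this
      linear_combination this
    have hlim : Filter.Tendsto F Filter.atTop (nhds 0) := by
      have : Filter.Tendsto (fun t : ℝ => ∫ s, ρ s • U (t - s)) Filter.atTop (nhds (∫ s : ℝ, (0:ℂ))) := by
        refine tendsto_integral_filter_of_dominated_convergence (fun s => ‖ρ s‖ * B) ?_ ?_ ?_ ?_
        · exact Filter.Eventually.of_forall (fun t => (hρ.continuous.smul (by fun_prop)).aestronglyMeasurable)
        · refine Filter.Eventually.of_forall (fun t => Filter.Eventually.of_forall (fun s => ?_))
          rw [norm_smul]
          exact mul_le_mul_of_nonneg_left (hB _) (norm_nonneg _)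
        · exact (hρ.continuous.integrable_of_hasCompactSupport hρc).norm.mul_const B
        · refine Filter.Eventually.of_forall (fun s => ?_)
          have h1 : Filter.Tendsto (fun t : ℝ => t - s) Filter.atTop (Filter.cocompact ℝ) :=
            (Filter.tendsto_atTop_add_const_right _ (-s) Filter.tendsto_id).mono_right atTop_le_cocompact
          simpa using (h0.comp h1).const_smul (ρ s)
      simpa using! this
    have ha : F1 0 = 0 := by
      have h1 : Filter.Tendsto (fun t : ℝ => F (t+1) - F t) Filter.atTop (nhds (0 - 0)) :=
        (hlim.comp (Filter.tendsto_atTop_add_const_right _ 1 Filter.tendsto_id)).sub hlim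
      have h2 : (fun t : ℝ => F (t+1) - F t) = fun t => F1 0 := by
        funext t; rw [hFa (t+1), hFa t]; push_cast; ring
      rw [h2] at h1
      simpa using tendsto_nhds_unique tendsto_const_nhds h1
    have hb : F 0 = 0 := by
      have : F = fun t => F 0 := by funext t; rw [hFa t, ha]; simp
      rw [this] at hlim
      exact tendsto_nhds_unique tendsto_const_nhds hlim
    intro t
    have := hFa t
    rw [ha, hb] at this
    simpa using! this
  have hV : Continuous (fun s => U (0 - s)) := by fun_prop
  have := ae_eq_zero_of_integral_contDiff_smul_eq_zero hV.locallyIntegrable (μ := volume)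
    (fun ρ hρ hρc => key ρ hρ hρc 0)
  have h2 := (hV.ae_eq_iff_eq volume continuous_const).1 this
  intro x
  have := congrFun h2 (-x)
  simpa using this

open Complex MeasureTheory
open scoped Classical
open scoped FourierTransform
open scoped ContDiff

lemma fourier_cont (f : ℝ → ℂ) (hf : Integrable f) : Continuous (𝓕 f) := 
  VectorFourier.fourierIntegral_continuous Real.continuous_fourierChar (L := innerₗ ℝ) continuous_inner hf

lemma fourier_bdd (f : ℝ → ℂ) (x : ℝ) : ‖𝓕 f x‖ ≤ ∫ y, ‖f y‖ :=
  VectorFourier.norm_fourierIntegral_le_integral_norm _ _ _ _ _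

lemma gw_contDiff (τ : ℂ) : ContDiff ℝ ∞ (gw τ) := by
  unfold gw e
  have : ContDiff ℝ ∞ (fun x : ℝ => (x:ℂ)) := Complex.ofRealCLM.contDiff
  fun_prop

lemma gw_mul_neg (τ : ℂ) (x : ℝ) : gw τ x * gw (-τ) x = 1 := by
  unfold gw
  rw [← e_add, ← e_zero]; congr 1; ring

lemma tendsto_bdd (U : ℝ → ℂ) (hU : Continuous U) 
    (h0 : Filter.Tendsto U (Filter.cocompact ℝ) (nhds 0)) : ∃ B, ∀ x, ‖U x‖ ≤ B := by
  obtain ⟨C, hC⟩ := ZeroAtInftyContinuousMap.bounded (⟨⟨U, hU⟩, h0⟩ : ZeroAtInftyContinuousMap ℝ ℂ)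
  refine ⟨C + ‖U 0‖, fun x => ?_⟩
  have h1 : dist (U x) (U 0) ≤ C := hC x 0
  rw [dist_eq_norm] at h1
  have := norm_sub_norm_le (U x) (U 0)
  linarith

lemma fourier_gfun (τ : ℂ) (hτ : 0 < τ.im) (y : ℝ) : 𝓕 (gfun (-1/τ)) y = Complex.I * rt τ * gfun τ y := by
  have hσ := neg_inv_im τ hτ
  set C := Complex.I * rt τ with hC
  set U : ℝ → ℂ := fun x => (𝓕 (gfun (-1/τ)) x - C * gfun τ x) * gw (-τ) x with hU
  have hUc : Continuous U := ((fourier_cont _ (gfun_integrable _ hσ)).sub (continuous_const.mul (gfun_continuous τ hτ))).mul (gw_continuous _)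
  have hg0 : Filter.Tendsto (fun x => gw (-τ) x) (Filter.cocompact ℝ) (nhds 0) := by
    rw [tendsto_zero_iff_norm_tendsto_zero]
    simp only [norm_gw_neg]
    exact exp_tendsto _ (mul_pos Real.pi_pos hτ)
  have hU0 : Filter.Tendsto U (Filter.cocompact ℝ) (nhds 0) := by
    have h1 : Filter.Tendsto (fun x => 𝓕 (gfun (-1/τ)) x * gw (-τ) x) (Filter.cocompact ℝ) (nhds 0) := by
      refine squeeze_zero_norm (a := fun x => (∫ y, ‖gfun (-1/τ) y‖) * ‖gw (-τ) x‖) (fun x => ?_) ?_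
      · rw [norm_mul]; exact mul_le_mul_of_nonneg_right (fourier_bdd _ x) (norm_nonneg _)
      · simpa using hg0.norm.const_mul (∫ y, ‖gfun (-1/τ) y‖)
    have h2 : Filter.Tendsto (fun x => C * gfun τ x * gw (-τ) x) (Filter.cocompact ℝ) (nhds 0) := by
      refine squeeze_zero_norm (a := fun x => ‖C‖ * ‖kk τ x‖) (fun x => ?_) ?_
      · rw [gfun_eq_kk τ, show C * (gw τ x * (Real.sign x : ℂ) * kk τ x) * gw (-τ) x = C * ((Real.sign x : ℂ) * kk τ x) * (gw τ x * gw (-τ) x) by ring,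
          gw_mul_neg, mul_one, norm_mul C, norm_mul (Real.sign x : ℂ)]
        refine mul_le_mul_of_nonneg_left ?_ (norm_nonneg _)
        refine mul_le_of_le_one_left (norm_nonneg _) ?_
        exact abs_sign_le x
      · simpa using (kk_tendsto τ hτ).norm.const_mul ‖C‖
    have := h1.sub h2
    simp only [sub_zero] at this
    refine this.congr (fun x => ?_)
    simp only [hU]; ring
  obtain ⟨B, hB⟩ := tendsto_bdd U hUc hU0
  have hz := lemW U hUc B hB hU0 (by
    intro ψ hψ hψc
    set φ0 : ℝ → ℂ := fun x => gw (-τ) x * (ψ x : ℂ) with hφ0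
    have hψC : ContDiff ℝ ∞ (fun x => (ψ x : ℂ)) := Complex.ofRealCLM.contDiff.comp hψ
    have hφs : ContDiff ℝ ∞ φ0 := (gw_contDiff _).mul hψC
    have hφc : HasCompactSupport φ0 := 
      HasCompactSupport.mul_left (hψc.comp_left (g := fun r : ℝ => (r:ℂ)) (by simp))
    set φ := hφc.toSchwartzMap hφs with hφ
    have hφa : ∀ x, φ x = gw (-τ) x * (ψ x : ℂ) := fun x => rfl
    have hψ1 : ContDiff ℝ ∞ (deriv ψ) := ((contDiff_infty_iff_deriv (𝕜 := ℝ)).1 hψ).2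
    have hD1 : ∀ x, gw τ x * Dst τ φ x = -((deriv ψ x : ℝ) : ℂ) := by
      intro x
      have h1 := gw_mul_hasDerivAt τ φ x
      have h2 : (fun x => gw τ x * φ x) = fun x => (ψ x : ℂ) := by
        funext x; rw [hφa, ← mul_assoc, gw_mul_neg, one_mul]
      rw [h2] at h1
      have h3 := ((hψ.differentiable (by norm_num)) x).hasDerivAt.ofReal_comp
      rw [← h1.unique h3, neg_neg]
    have hD2 : ∀ x, gw τ x * Dst τ (Dst τ φ) x = ((deriv (deriv ψ) x : ℝ) : ℂ) := by
      intro x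
      have h1 := gw_mul_hasDerivAt τ (Dst τ φ) x
      rw [funext hD1] at h1
      have h3 := ((hψ1.differentiable (by norm_num)) x).hasDerivAt.ofReal_comp.fun_neg
      have := h1.unique h3
      linear_combination -this
    have hint1 : Integrable (fun x => 𝓕 (gfun (-1/τ)) x * Dst τ (Dst τ φ) x) :=
      (Dst τ (Dst τ φ)).integrable.bdd_mul (fourier_cont _ (gfun_integrable _ hσ)).aestronglyMeasurable
        (Filter.Eventually.of_forall (fourier_bdd _))
    obtain ⟨K, _, hK⟩ := schwartz_bdd (Dst τ (Dst τ φ))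
    have hint2 : Integrable (fun x => gfun τ x * Dst τ (Dst τ φ) x) :=
      (gfun_integrable τ hτ).mul_bdd (Dst τ (Dst τ φ)).continuous.aestronglyMeasurable
        (Filter.Eventually.of_forall hK)
    have hp := pairing τ hτ φ
    rw [← integral_const_mul, ← sub_eq_zero, ← integral_sub hint1 (hint2.const_mul _)] at hp
    rw [← hp]
    congr 1; funext x
    rw [← hD2 x]; simp only [hU]
    linear_combination ((𝓕 (gfun (-1/τ)) x - C * gfun τ x) * Dst τ (Dst τ φ) x) * gw_mul_neg τ x)
  have := hz y
  simp only [hU] at this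
  rcases mul_eq_zero.1 this with h | h
  · exact sub_eq_zero.1 h
  · have := gw_mul_neg τ y
    rw [h] at this; simp at this

open Complex MeasureTheory
open scoped Classical
open scoped FourierTransform
open scoped ContDiff

open scoped SchwartzMap in
lemma schwartz_summable_int (f : 𝓢(ℝ, ℂ)) : Summable (fun n : ℤ => f (n:ℝ)) := by
  have h1 : Summable (fun m : ℤ => |(m:ℝ)| ^ (-2:ℝ)) := by
    have : Summable (fun m : ℤ => (1:ℝ) / |(m:ℝ) + 0| ^ (2:ℝ)) :=
      Real.summable_one_div_int_add_rpow 0 2 |>.2 (by norm_num)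
    refine this.congr (fun m => ?_)
    rw [Real.rpow_neg (abs_nonneg _), one_div, add_zero]
  exact summable_of_isBigO h1 ((schwartz_isBigO f).comp_tendsto Int.tendsto_coe_cofinite)

open scoped SchwartzMap in
lemma poisson_pair (M : ℝ) (f : 𝓢(ℝ, ℂ)) (g : ℝ → ℂ) (hg : Integrable g) :
    ∫ x, g x * ∑' n : ℤ, f (x/M + n) = ∑' n : ℤ, (𝓕 f) (n:ℝ) * 𝓕 g (-(n/M)) := by
  have hs := schwartz_summable_int (𝓕 f)
  have h1 : ∀ x : ℝ, g x * ∑' n : ℤ, f (x/M + n) = ∑' n : ℤ, (𝓕 f) (n:ℝ) * (e ((-(x * (-(n/M)) ) : ℝ) : ℂ) * g x) := by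
    intro x
    rw [SchwartzMap.tsum_eq_tsum_fourier, ← tsum_mul_left]
    refine tsum_congr (fun n => ?_)
    rw [fourier_coe_apply, e]
    rw [show (2 * (Real.pi:ℂ) * Complex.I * n * ((x/M : ℝ) : ℂ) / ((1:ℝ):ℂ)) = 2 * (Real.pi:ℂ) * Complex.I * ((-(x * (-(n/M)) ) : ℝ) : ℂ) by
      push_cast; ring]
    ring
  simp only [h1]
  have hint : ∀ n : ℤ, Integrable (fun x : ℝ => e ((-(x * (-(n/M)) ) : ℝ) : ℂ) * g x) := by
    intro n
    refine hg.bdd_mul (c := 1) (e_continuous.comp (by fun_prop)).aestronglyMeasurable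
      (Filter.Eventually.of_forall (fun x => ?_))
    exact (norm_e_real _).le
  rw [← integral_tsum_of_summable_integral_norm (fun n => (hint n).const_mul _)]
  · refine tsum_congr (fun n => ?_)
    rw [integral_const_mul, fourier_e]
  · have : ∀ n : ℤ, ∫ x : ℝ, ‖(𝓕 f) (n:ℝ) * (e ((-(x * (-(n/M)) ) : ℝ) : ℂ) * g x)‖ = ‖(𝓕 f) (n:ℝ)‖ * ∫ x, ‖g x‖ := by
      intro n
      rw [← integral_const_mul]; congr 1; funext x
      rw [norm_mul, norm_mul, norm_e_real, one_mul]
    simp only [this]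
    exact hs.norm.mul_right _

lemma summable_exp_abs (a : ℝ) (ha : 0 < a) : Summable (fun n : ℤ => Real.exp (-a * |(n:ℝ)|)) := by
  have h : Summable (fun n : ℕ => Real.exp (-a * n)) := by
    have := Real.summable_exp_nat_mul_iff.2 (neg_lt_zero.2 ha)
    exact this.congr (fun n => by rw [mul_comm])
  refine Summable.of_nat_of_neg ?_ ?_
  · refine h.congr (fun n => by simp)
  · refine h.congr (fun n => by simp)

lemma half_dist (y0 : ℝ) (h : ∀ m : ℤ, y0 ≠ m + 1/2) :
    ∃ δ : ℝ, 0 < δ ∧ δ ≤ 1 ∧ ∀ z ∈ Metric.ball y0 δ, ∀ m : ℤ, δ ≤ |z - (m + 1/2)| := by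
  have hcl : IsClosed (Set.range (fun m : ℤ => (m:ℝ) + 1/2)) := by
    have := (Homeomorph.addRight (1/2:ℝ)).isClosedEmbedding.comp Int.isClosedEmbedding_coe_real
    exact this.isClosed_range
  have hmem : y0 ∈ (Set.range (fun m : ℤ => (m:ℝ) + 1/2))ᶜ := by
    rintro ⟨m, hm⟩; exact h m hm.symm
  obtain ⟨ε, hε, hb⟩ := Metric.isOpen_iff.1 hcl.isOpen_compl y0 hmem
  refine ⟨min (ε/2) 1, by positivity, min_le_right _ _, fun z hz m => ?_⟩
  by_contra hlt
  push Not at hlt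
  have h1 : (m:ℝ) + 1/2 ∈ Metric.ball y0 ε := by
    rw [Metric.mem_ball, Real.dist_eq] at hz ⊢
    have h2 := min_le_left (ε/2) 1
    have h3 := abs_sub_le ((m:ℝ)+1/2) z y0
    rw [abs_sub_comm ((m:ℝ)+1/2) z] at h3
    linarith
  exact hb h1 ⟨m, rfl⟩

lemma decay_shift (σ : ℂ) (hσ : 0 < σ.im) (N : ℕ) (hN : 0 < N) (y0 : ℝ) (h : ∀ m : ℤ, y0 ≠ m + 1/2) :
    ∃ δ : ℝ, 0 < δ ∧ ∃ u : ℤ → ℝ, Summable u ∧ ∀ n : ℤ, ∀ z ∈ Metric.ball y0 δ, ‖gfun σ ((N:ℝ) * n + z)‖ ≤ u n := by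
  obtain ⟨δ, hδ, hδ1, hd⟩ := half_dist y0 h
  obtain ⟨K, hK, hg⟩ := gfun_decay σ hσ δ hδ hδ1
  set c := Real.pi * σ.im * δ with hc
  have hc0 : 0 < c := by have := Real.pi_pos; positivity
  refine ⟨δ, hδ, fun n => K * Real.exp (c * (|y0| + 1)) * Real.exp (-(c * N) * |(n:ℝ)|), 
    (summable_exp_abs _ (by positivity)).mul_left _, fun n z hz => ?_⟩
  refine (hg _ (fun k hk => ?_)).trans ?_
  · rcases le_total 0 ((N:ℝ) * n + z) with h0 | h0
    · have := hd z hz ((k:ℤ) - N * n)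
      rw [abs_of_nonneg h0] at hk ⊢
      push_cast at this
      rw [abs_sub_comm, abs_of_nonneg (by linarith)] at this
      linarith
    · have := hd z hz (-(k:ℤ) - 1 - N * n)
      rw [abs_of_nonpos h0] at hk ⊢
      push_cast at this
      rw [abs_of_nonneg (by linarith)] at this
      linarith
  · clear_value c
    beta_reduce
    rw [mul_assoc K, ← Real.exp_add]
    refine mul_le_mul_of_nonneg_left (Real.exp_le_exp.2 ?_) hK
    have h1 : |z| ≤ |y0| + 1 := by
      rw [Metric.mem_ball, Real.dist_eq] at hz
      have := abs_sub_abs_le_abs_sub z y0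
      linarith
    have h2 : (N:ℝ) * |(n:ℝ)| - |z| ≤ |(N:ℝ) * n + z| := by
      have := abs_sub_abs_le_abs_sub ((N:ℝ) * n) (-z)
      rw [abs_neg, sub_neg_eq_add, abs_mul, Nat.abs_cast] at this
      exact this
    nlinarith

lemma rhs_summable (N : ℕ) (hN : 0 < N) (τ : ℂ) (hτ : 0 < τ.im) :
    Summable (fun n : ℤ => ‖gfun τ ((n : ℝ) / N)‖) := by
  have hN' : (0:ℝ) < N := by exact_mod_cast hN
  have hN1 : (1:ℝ) ≤ N := by exact_mod_cast hN
  obtain ⟨K, hK, hg⟩ := gfun_decay τ hτ (1/(2*N)) (by positivity) (by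
    rw [div_le_one (by positivity)]; linarith)
  have hp := Real.pi_pos
  refine Summable.of_nonneg_of_le (fun n => norm_nonneg _) (fun n => hg _ (fun k hk => ?_))
    (((summable_exp_abs (Real.pi * τ.im * (1/(2*N)) / N) (by positivity)).mul_left K).congr (fun n => ?_))
  · rw [abs_div, Nat.abs_cast] at hk ⊢
    have h1 : 2 * |(n:ℝ)| < (2 * k + 1) * N := by
      have := (div_lt_iff₀ hN').1 hk
      linarith
    have h2 : 2 * |n| + 1 ≤ (2 * k + 1) * N := by
      have : 2 * |n| < (2 * k + 1) * N := by exact_mod_cast h1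
      lia
    have h3 : 2 * |(n:ℝ)| + 1 ≤ (2 * k + 1) * N := by exact_mod_cast h2
    rw [le_sub_iff_add_le]
    have : 1/(2*(N:ℝ)) + |(n:ℝ)|/N = (2 * |(n:ℝ)| + 1) / (2 * N) := by field_simp; ring
    rw [this, div_le_iff₀ (by positivity)]
    linarith
  · rw [abs_div, Nat.abs_cast]; congr 2; ring

open Complex MeasureTheory
open scoped Classical
open scoped FourierTransform
open scoped ContDiff

lemma G_test (N : ℕ) (hN : 0 < N) (τ : ℂ) (hτ : 0 < τ.im) (O : Set ℝ) (u : ℤ → ℝ) (hu : Summable u)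
    (hb : ∀ n : ℤ, ∀ z ∈ O, ‖gfun (-1/τ) ((N:ℝ) * n + z)‖ ≤ u n) (φ : ℝ → ℝ) (hφ : ContDiff ℝ ∞ φ)
    (hφc : HasCompactSupport φ) (hφs : tsupport φ ⊆ O) :
    ∫ x, (φ x : ℂ) * ∑' n : ℤ, gfun (-1/τ) ((N:ℝ) * n + x) =
      ∫ x, (φ x : ℂ) * ∑' n : ℤ, Complex.I * rt τ / N * (gfun τ ((n : ℝ) / N) * e ((((n : ℝ) * x / N : ℝ) : ℂ))) := by
  have hσ := neg_inv_im τ hτ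
  have hN' : (0:ℝ) < N := by exact_mod_cast hN
  have hNc : (N:ℂ) ≠ 0 := by exact_mod_cast hN.ne'
  set g := gfun (-1/τ) with hg
  have hgc : Continuous g := gfun_continuous _ hσ
  have hgi : Integrable g := gfun_integrable _ hσ
  set f0 : ℝ → ℂ := fun t => (φ (N * t) : ℂ) with hf0
  have hφC : Continuous (fun x => (φ x : ℂ)) := Complex.continuous_ofReal.comp hφ.continuous
  have hφcC : HasCompactSupport (fun x => (φ x : ℂ)) := hφc.comp_left (g := fun r : ℝ => (r:ℂ)) (by simp)
  have hf0s : ContDiff ℝ ∞ f0 := Complex.ofRealCLM.contDiff.comp (hφ.comp (contDiff_const.mul contDiff_id))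
  have hf0c : HasCompactSupport f0 := hφcC.comp_homeomorph (Homeomorph.mulLeft₀ (N:ℝ) hN'.ne')
  set f := hf0c.toSchwartzMap hf0s with hf
  have hfa : ∀ t, f t = (φ (N * t) : ℂ) := fun t => rfl
  have hφi : Integrable (fun x => (φ x : ℂ)) := hφC.integrable_of_hasCompactSupport hφcC
  set F : ℤ → ℝ → ℂ := fun n x => (φ x : ℂ) * g ((N:ℝ) * n + x) with hF
  have hFi : ∀ n, Integrable (F n) := fun n =>
    (hφC.mul (hgc.comp (by fun_prop))).integrable_of_hasCompactSupport hφcC.mul_right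
  have hFb : ∀ n x, ‖F n x‖ ≤ u n * ‖(φ x : ℂ)‖ := by
    intro n x
    simp only [hF]
    rw [norm_mul, mul_comm]
    by_cases hx : x ∈ O
    · exact mul_le_mul_of_nonneg_right (hb n x hx) (norm_nonneg _)
    · have : φ x = 0 := by
        by_contra h
        exact hx (hφs (subset_tsupport _ h))
      simp [this]
  have hFsum : Summable (fun n => ∫ x, ‖F n x‖) := by
    refine Summable.of_nonneg_of_le (fun n => integral_nonneg (fun x => norm_nonneg _)) (fun n => ?_)
      (hu.mul_right (∫ x, ‖(φ x : ℂ)‖))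
    rw [← integral_const_mul]
    exact integral_mono (hFi n).norm (hφi.norm.const_mul _) (hFb n)
  -- shifted functions
  set H : ℤ → ℝ → ℂ := fun n x => g x * f (x/N + n) with hH
  have hHF : ∀ n x, H n x = F (-n) (x - (N:ℝ) * ((-n : ℤ) : ℝ)) := by
    intro n x
    simp only [hH, hF, hfa]
    rw [mul_comm]
    have h1 : (N:ℝ) * (x/N + n) = x - N * ((-n : ℤ) : ℝ) := by push_cast; field_simp; ring
    have h2 : (N:ℝ) * ((-n : ℤ) : ℝ) + (x - N * ((-n : ℤ) : ℝ)) = x := by ring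
    rw [h1, h2]
  have hHi : ∀ n, Integrable (H n) := by
    intro n
    rw [funext (hHF n)]
    exact (hFi (-n)).comp_sub_right _
  have hHsum : Summable (fun n => ∫ x, ‖H n x‖) := by
    have h1 : ∀ n, ∫ x, ‖H n x‖ = ∫ x, ‖F (-n) x‖ := by
      intro n
      rw [← integral_sub_right_eq_self (fun x => ‖F (-n) x‖) ((N:ℝ) * ((-n : ℤ) : ℝ))]
      simp only [hHF]
    simp only [h1]
    exact (Equiv.neg ℤ).summable_iff.2 hFsum
  have hHint : ∀ n, ∫ x, H n x = ∫ x, F (-n) x := by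
    intro n
    rw [← integral_sub_right_eq_self (fun x => F (-n) x) ((N:ℝ) * ((-n : ℤ) : ℝ))]
    simp only [hHF]
  have hA : ∫ x, (φ x : ℂ) * ∑' n : ℤ, g ((N:ℝ) * n + x) = ∑' n : ℤ, (𝓕 f) (n:ℝ) * 𝓕 g (-(n/N)) := by
    rw [← poisson_pair N f g hgi]
    simp only [← tsum_mul_left]
    have e1 := integral_tsum_of_summable_integral_norm hFi hFsum
    have e2 := integral_tsum_of_summable_integral_norm hHi hHsum
    rw [← e1, ← e2]
    simp only [hHint]
    exact ((Equiv.neg ℤ).tsum_eq (fun n => ∫ x, F n x)).symm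
  have hffour : ∀ n : ℤ, ∫ x : ℝ, (φ x : ℂ) * e ((((n : ℝ) * x / N : ℝ) : ℂ)) = N * (𝓕 f) ((-n : ℤ) : ℝ) := by
    intro n
    rw [SchwartzMap.fourier_coe, fourier_e]
    have := Measure.integral_comp_mul_left (fun x : ℝ => (φ x : ℂ) * e ((((n : ℝ) * x / N : ℝ) : ℂ))) (N:ℝ)
    have h2 : ∫ v : ℝ, e (((-(v * ((-n : ℤ) : ℝ)) : ℝ)) : ℂ) * f v = 
       ∫ x : ℝ, (φ (N * x) : ℂ) * e ((((n : ℝ) * (N * x) / N : ℝ) : ℂ)) := by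
      congr 1; funext v
      rw [hfa, mul_comm]; congr 3
      push_cast; field_simp
    rw [h2, this, abs_of_nonneg (by positivity), Complex.real_smul]
    push_cast
    field_simp
  have hB : ∫ x, (φ x : ℂ) * ∑' n : ℤ, Complex.I * rt τ / N * (gfun τ ((n : ℝ) / N) * e ((((n : ℝ) * x / N : ℝ) : ℂ))) =
     ∑' n : ℤ, Complex.I * rt τ * gfun τ ((n : ℝ) / N) * (𝓕 f) ((-n : ℤ) : ℝ) := by
    have h1 : ∀ x : ℝ, (φ x : ℂ) * ∑' n : ℤ, Complex.I * rt τ / N * (gfun τ ((n : ℝ) / N) * e ((((n : ℝ) * x / N : ℝ) : ℂ))) =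
       ∑' n : ℤ, Complex.I * rt τ / N * gfun τ ((n : ℝ) / N) * ((φ x : ℂ) * e ((((n : ℝ) * x / N : ℝ) : ℂ))) := by
      intro x
      rw [← tsum_mul_left]
      refine tsum_congr (fun n => by ring)
    simp only [h1]
    have hi : ∀ n : ℤ, Integrable (fun x : ℝ => (φ x : ℂ) * e ((((n : ℝ) * x / N : ℝ) : ℂ))) := fun n =>
      (hφC.mul (e_continuous.comp (by fun_prop))).integrable_of_hasCompactSupport hφcC.mul_right
    rw [← integral_tsum_of_summable_integral_norm (fun n => (hi n).const_mul _)]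
    · refine tsum_congr (fun n => ?_)
      rw [integral_const_mul, hffour]
      field_simp
    · have h3 : ∀ n : ℤ, ∫ x : ℝ, ‖Complex.I * rt τ / N * gfun τ ((n : ℝ) / N) * ((φ x : ℂ) * e ((((n : ℝ) * x / N : ℝ) : ℂ)))‖ =
          ‖Complex.I * rt τ / N‖ * ‖gfun τ ((n : ℝ) / N)‖ * ∫ x, ‖(φ x : ℂ)‖ := by
        intro n
        rw [← integral_const_mul]; congr 1; funext x
        rw [norm_mul, norm_mul, norm_mul (φ x : ℂ), norm_e_real, mul_one]
      simp only [h3]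
      exact ((rhs_summable N hN τ hτ).mul_left _).mul_right _
  rw [hA, hB, ← (Equiv.neg ℤ).tsum_eq]
  refine tsum_congr (fun n => ?_)
  rw [hg, fourier_gfun τ hτ]
  simp only [Equiv.neg_apply]
  rw [mul_comm, show -(((-n : ℤ) : ℝ) / N) = (n:ℝ)/N by push_cast; ring]

lemma T_cont (N : ℕ) (hN : 0 < N) (τ : ℂ) (hτ : 0 < τ.im) (c : ℂ) :
    Continuous (fun x : ℝ => ∑' n : ℤ, c * (gfun τ ((n : ℝ) / N) * e ((((n : ℝ) * x / N : ℝ) : ℂ)))) := by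
  refine continuous_tsum (u := fun n : ℤ => ‖c‖ * ‖gfun τ ((n : ℝ) / N)‖) (fun n => ?_) ((rhs_summable N hN τ hτ).mul_left _) (fun n x => ?_)
  · exact continuous_const.mul (continuous_const.mul (e_continuous.comp (by fun_prop)))
  · rw [norm_mul, norm_mul, norm_e_real, mul_one]

lemma G_eq (N : ℕ) (hN : 0 < N) (τ : ℂ) (hτ : 0 < τ.im) (y0 : ℝ) (h : ∀ m : ℤ, y0 ≠ m + 1/2) :
    ∑' n : ℤ, gfun (-1/τ) ((N:ℝ) * n + y0) =
      ∑' n : ℤ, Complex.I * rt τ / N * (gfun τ ((n : ℝ) / N) * e ((((n : ℝ) * y0 / N : ℝ) : ℂ))) := by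
  have hσ := neg_inv_im τ hτ
  obtain ⟨δ, hδ, u, hu, hb⟩ := decay_shift (-1/τ) hσ N hN y0 h
  set G : ℝ → ℂ := fun x => ∑' n : ℤ, gfun (-1/τ) ((N:ℝ) * n + x) with hG
  set T : ℝ → ℂ := fun x => ∑' n : ℤ, Complex.I * rt τ / N * (gfun τ ((n : ℝ) / N) * e ((((n : ℝ) * x / N : ℝ) : ℂ))) with hT
  have hTc : Continuous T := T_cont N hN τ hτ _
  have hGc : ContinuousOn G (Metric.ball y0 δ) :=
    continuousOn_tsum (fun n => ((gfun_continuous _ hσ).comp (by fun_prop)).continuousOn) hu hb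
  have hae := Metric.isOpen_ball.ae_eq_zero_of_integral_contDiff_smul_eq_zero (μ := volume) (f := fun x => G x - T x)
    (U := Metric.ball y0 δ) ((hGc.sub hTc.continuousOn).locallyIntegrableOn Metric.isOpen_ball.measurableSet) (by
      intro φ hφ hφc hφs
      have ht := G_test N hN τ hτ (Metric.ball y0 δ) u hu hb φ hφ hφc hφs
      have hi2 : Integrable (fun x => (φ x : ℂ) * T x) :=
        ((Complex.continuous_ofReal.comp hφ.continuous).mul hTc).integrable_of_hasCompactSupport
          (hφc.comp_left (g := fun r : ℝ => (r:ℂ)) (by simp)).mul_right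
      have hi1 : Integrable (fun x => (φ x : ℂ) * G x) := by
        refine Continuous.integrable_of_hasCompactSupport ?_ (hφc.comp_left (g := fun r : ℝ => (r:ℂ)) (by simp)).mul_right
        refine continuous_iff_continuousAt.2 (fun x => ?_)
        by_cases hx : x ∈ tsupport φ
        · exact (Complex.continuous_ofReal.comp hφ.continuous).continuousAt.mul
            (hGc.continuousAt (Metric.isOpen_ball.mem_nhds (hφs hx)))
        · have := notMem_tsupport_iff_eventuallyEq.1 hx
          refine (continuousAt_const (y := (0:ℂ))).congr ?_
          filter_upwards [this] with y hy
          simp [hy]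
      rw [← sub_eq_zero, ← integral_sub hi1 hi2] at ht
      rw [← ht]; congr 1; funext x
      rw [Complex.real_smul, mul_sub])
  have hae2 : G =ᵐ[volume.restrict (Metric.ball y0 δ)] T := by
    rw [Filter.EventuallyEq, ae_restrict_iff' Metric.isOpen_ball.measurableSet]
    filter_upwards [hae] with x hx hxm
    exact sub_eq_zero.1 (hx hxm)
  exact Measure.eqOn_open_of_ae_eq hae2 Metric.isOpen_ball hGc hTc.continuousOn (Metric.mem_ball_self hδ)

lemma const_eq (τ : ℂ) (hτ : 0 < τ.im) : τ ^ (-(1/2) : ℂ) * (Complex.I * rt τ) = e ((1:ℂ)/8) := by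
  have h0 := ne_zero_of_im τ hτ
  have h1 : -Complex.I * τ ≠ 0 := by simp [h0]
  have hlog : Complex.log (-Complex.I * τ) = Complex.log τ - Real.pi / 2 * Complex.I := by
    have := Complex.log_mul (x := -Complex.I) (y := τ) (by simp) h0 (by
      rw [Complex.arg_neg_I]
      have h2 := Complex.arg_le_pi τ
      have h3 : 0 ≤ Complex.arg τ := Complex.arg_nonneg_iff.2 hτ.le
      have := Real.pi_pos
      constructor <;> linarith)
    rw [this, Complex.log_neg_I]; ring
  unfold rt e
  rw [Complex.cpow_def_of_ne_zero h0, Complex.cpow_def_of_ne_zero h1, hlog]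
  rw [show Complex.I * Complex.exp ((Complex.log τ - Real.pi / 2 * Complex.I) * (1/2)) =
     Complex.exp (Real.pi / 2 * Complex.I) * Complex.exp ((Complex.log τ - Real.pi / 2 * Complex.I) * (1/2)) by
      rw [Complex.exp_pi_div_two_mul_I]]
  rw [← Complex.exp_add, ← Complex.exp_add]
  congr 1; ring

/-- Poisson-summation limit formula for `τ^{-1/2} G_{-1/τ}`. -/
theorem Gfun_poisson (N : ℕ) (hN : 0 < N) (hNe : Even N) (τ : ℂ) (hτ : 0 < τ.im) (x₀ : ℝ) :
    Summable (fun n : ℤ => ‖gfun τ ((n : ℝ) / N) * e ((((n : ℝ) * x₀ / N : ℝ) : ℂ))‖) ∧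
    Filter.Tendsto
      (fun x : ℝ => τ ^ (-(1/2) : ℂ) * ∑' n : ℤ, gfun (-1/τ) ((N : ℝ) * n + x))
      (nhdsWithin x₀ {x₀}ᶜ)
      (nhds (e ((1:ℂ)/8) / N *
        ∑' n : ℤ, gfun τ ((n : ℝ) / N) * e ((((n : ℝ) * x₀ / N : ℝ) : ℂ)))) := by
  refine ⟨(rhs_summable N hN τ hτ).congr (fun n => ?_), ?_⟩
  · rw [norm_mul, norm_e_real, mul_one]
  have hc := (T_cont N hN τ hτ (Complex.I * rt τ / N)).tendsto x₀
  have hc2 := (hc.mono_left (nhdsWithin_le_nhds (s := {x₀}ᶜ))).const_mul (τ ^ (-(1/2) : ℂ))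
  rw [tsum_mul_left, show τ ^ (-(1/2) : ℂ) * (Complex.I * rt τ / N * ∑' n : ℤ, gfun τ ((n : ℝ) / N) * e ((((n : ℝ) * x₀ / N : ℝ) : ℂ)))
    = (τ ^ (-(1/2) : ℂ) * (Complex.I * rt τ)) / N * ∑' n : ℤ, gfun τ ((n : ℝ) / N) * e ((((n : ℝ) * x₀ / N : ℝ) : ℂ)) by ring,
    const_eq τ hτ] at hc2
  refine hc2.congr' ?_
  have hcl : ∀ᶠ x : ℝ in nhdsWithin x₀ {x₀}ᶜ, ∀ m : ℤ, x ≠ m + 1/2 := by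
    have hE : Topology.IsClosedEmbedding (fun m : ℤ => (m:ℝ) + 1/2) :=
      (Homeomorph.addRight (1/2:ℝ)).isClosedEmbedding.comp Int.isClosedEmbedding_coe_real
    by_cases hx : ∃ m0 : ℤ, x₀ = m0 + 1/2
    · obtain ⟨m0, hm0⟩ := hx
      have : ∀ᶠ x in nhds x₀, x ∈ Metric.ball x₀ 1 := Metric.ball_mem_nhds _ one_pos
      filter_upwards [this.filter_mono nhdsWithin_le_nhds, self_mem_nhdsWithin] with x hx hxne m hm
      rw [Metric.mem_ball, Real.dist_eq, hm, hm0] at hx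
      have h1 : |m - m0| < 1 := by
        have : |(m:ℝ) - m0| < 1 := by rw [show (m:ℝ) - m0 = m + 1/2 - (m0 + 1/2) by ring]; exact hx
        exact_mod_cast this
      have h2 : m = m0 := by
        have := Int.abs_lt_one_iff.1 h1
        lia
      exact hxne (by rw [Set.mem_singleton_iff, hm, hm0, h2])
    · have : ∀ᶠ x in nhds x₀, x ∈ (Set.range (fun m : ℤ => (m:ℝ) + 1/2))ᶜ :=
        hE.isClosed_range.isOpen_compl.mem_nhds (by rintro ⟨m, hm⟩; exact hx ⟨m, hm.symm⟩)
      filter_upwards [this.filter_mono nhdsWithin_le_nhds] with x hx m hm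
      exact hx ⟨m, hm.symm⟩
  filter_upwards [hcl] with x hx
  rw [G_eq N hN τ hτ x hx]
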